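/- Assume λ, α, θ > 0, β + θ < 1, (H2), m_τ, K_τ > 0 and 0 < τ < 1. Let (X, ρ) be a minimizer of J_{(X⁰,ρ⁰)} over 𝒜 with X ≥ X⁰, with transport structure (T, ℓ₋) (convention ℓ₋ = 0 if M := M(ρ,ρ⁰) ≥ 0), and let ρ' denote the weak derivative of ρ on (0,X). Then for every ψ ∈ C_c^∞(ℝ₊): | ∫_{ℝ₊} ((ρ(x) − ρ⁰(x))/τ) ψ(x) dx − (M/τ) ψ(0) + ∫₀^X ρ'(x) ψ'(x) dx | ≤ (‖ψ''‖_{L^∞(ℝ₊)}/τ) 𝐖₂²(ρ, ρ⁰) + (‖ψ'‖_{L^∞(ℝ₊)}/τ) ∫₀^{ℓ₋} y ρ⁰(y) dy. -/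

import Mathlib

/-!
The estimate follows from the Euler–Lagrange equation of the minimizer along inner deformations.
For a smooth `ζ` supported in `(0,X)`, the competitors `ρ_ε = (ρ ∘ Ψ) Ψ'` with `Ψ = id + ε ζ` have
the same mass and the same `X` as `ρ`, so in the functional only transport cost and entropy change.
The plan `T ∘ Ψ` is admissible for `ρ_ε` (`W2sq_le` turns a monotone plan into a coupling), and to
first order the cost changes by `-2 ε ∫ ζ (x - T x) ρ` (`cost_variation`) and the entropy by
`ε ∫ ζ' ρ` (`entropy_variation`). Since `ε` has either sign, `∫ ζ (x - T x) ρ = τ ∫ ζ' ρ`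
(`first_variation`): the weak derivative of `ρ` is `-(x - T x) ρ / τ`.

With `ψ'` in the place of `ζ`, the quantity to be estimated is `1 / τ` times
`∫ ρ (ψ - ψ ∘ T - (x - T x) ψ') - ∫₀^ℓ (ψ - ψ 0) ρ⁰`, because `T` pushes `ρ` on `(0,X)` to `ρ⁰` on
`(ℓ,X)` plus an atom of mass `M₊` at `0`. Taylor's formula bounds both terms (`TPlan.remainder`).

Three integrability questions are not settled by the hypotheses alone.
* Membership in `𝔸` does not control `ρ` near `0`. The transport structure does: the mass of `ρ` on
  `(0,X)` is finite (`TransportStruct.plan`), where the case `M ≥ 0` uses `ρ⁰(0) < 1`.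
* If `ρ ln ρ` were not integrable on `(0,X)`, the entropy integral would have the value `0` for all
  competitors. Stationarity of the cost alone then gives `T = id` on the support of `ρ`, hence
  `ρ ≤ ρ⁰ ≤ 1`, and `ρ ln ρ` is integrable after all (`entropy_integrable_of_stationary`).
* The weak derivative `g` is given by its pairing with test functions and need not be integrable.
  The identity `∫ g ψ' = -(1 / τ) ∫ (x - T x) ρ ψ'` holds regardless (`weak_deriv_pairing`).
-/

open MeasureTheory Real Set ENNReal Filter Topology

noncomputable section

/-- The threshold `ρ₋ = exp(β - θ - 1)`. -/
def rhoMinus (β θ : ℝ) : ℝ := Real.exp (β - θ - 1)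

/-- The threshold `ρ₊ = exp(β + θ - 1)`. -/
def rhoPlus (β θ : ℝ) : ℝ := Real.exp (β + θ - 1)

/-- Membership in the class `𝔸` of admissible densities on `ℝ₊`:
nonnegative a.e., locally integrable together with `ρ ln ρ`, and `≡ 1` a.e. eventually. -/
def MemAdm (ρ : ℝ → ℝ) : Prop :=
  (∀ᵐ x : ℝ, 0 < x → 0 ≤ ρ x) ∧
  LocallyIntegrableOn ρ (Ioi 0) volume ∧
  LocallyIntegrableOn (fun x => ρ x * Real.log (ρ x)) (Ioi 0) volume ∧
  ∃ x : ℝ, 0 < x ∧ (∀ᵐ y : ℝ, y ∈ Ioi x → ρ y = 1)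

/-- `x_ρ`, the infimum of the points after which `ρ ≡ 1` a.e. -/
def xA (ρ : ℝ → ℝ) : ℝ :=
  sInf {x : ℝ | 0 < x ∧ ∀ᵐ y : ℝ, y ∈ Ioi x → ρ y = 1}

/-- Membership of a pair `(X, ρ)` in the admissible set `𝒜`. -/
def MemAdmSet (X : ℝ) (ρ : ℝ → ℝ) : Prop := MemAdm ρ ∧ xA ρ ≤ X

/-- `𝐌(ρ) = -∫_{ℝ₊} (1 - ρ)`. -/
def Mfun (ρ : ℝ → ℝ) : ℝ := -∫ x in Ioi (0:ℝ), (1 - ρ x)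

/-- `M(ρ, ρ̃) = 𝐌(ρ) - 𝐌(ρ̃)`. -/
def Mdiff (ρ ρt : ℝ → ℝ) : ℝ := Mfun ρ - Mfun ρt

/-- `f(r) = r (ln r - β) + β`. -/
def fEnt (β r : ℝ) : ℝ := r * (Real.log r - β) + β

/-- The measure `ν(ρ, ρ̃) = ρ · Leb⌊(0,Λ) + (M(ρ̃,ρ))₊ δ₀`, `Λ = max(x_ρ, x_ρ̃)`. -/
def nuMeas (ρ ρt : ℝ → ℝ) : Measure ℝ :=
  (volume.withDensity (fun x => ENNReal.ofReal (ρ x))).restrict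
      (Ioo 0 (max (xA ρ) (xA ρt)))
    + (ENNReal.ofReal (Mdiff ρt ρ)) • Measure.dirac 0

/-- The squared Wasserstein distance `𝐖₂²(ρ, ρ̃)`: infimum of the quadratic transport
cost over couplings of `ν(ρ,ρ̃)` and `ν(ρ̃,ρ)`. -/
def W2sq (ρ ρt : ℝ → ℝ) : ℝ :=
  sInf {r : ℝ | ∃ γ : Measure (ℝ × ℝ),
    γ.map Prod.fst = nuMeas ρ ρt ∧ γ.map Prod.snd = nuMeas ρt ρ ∧
    r = ∫ p, (p.1 - p.2)^2 ∂γ}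

/-- The penalty function `p_τ(m) = (K_τ/2) ((-m - m_τ)₊)²`. -/
def ptau (Kτ mτ m : ℝ) : ℝ := Kτ / 2 * (max (-m - mτ) 0)^2

/-- The energy functional `E_{(X⁰,ρ⁰)}(X,ρ)`. -/
def Efun (α β θ : ℝ) (ρ0 : ℝ → ℝ) (X : ℝ) (ρ : ℝ → ℝ) : ℝ :=
  (∫ x in Ioi (0:ℝ), fEnt β (ρ x)) + θ * |Mdiff ρ ρ0| - α * X

/-- The squared tensorized metric `𝐝²((X,ρ),(X⁰,ρ⁰))`. -/
def dsq (lam : ℝ) (X0 : ℝ) (ρ0 : ℝ → ℝ) (X : ℝ) (ρ : ℝ → ℝ) : ℝ :=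
  W2sq ρ ρ0 + lam * (X - X0)^2

/-- The JKO functional `J_{(X⁰,ρ⁰)}`. -/
def Jfun (lam α β θ τ Kτ mτ : ℝ) (X0 : ℝ) (ρ0 : ℝ → ℝ) (X : ℝ) (ρ : ℝ → ℝ) : ℝ :=
  dsq lam X0 ρ0 X ρ / (2 * τ) + Efun α β θ ρ0 X ρ + ptau Kτ mτ (Mdiff ρ ρ0)

/-- `(X, ρ)` is a minimizer of the JKO functional over `𝒜`. -/
def IsJKOMin (lam α β θ τ Kτ mτ : ℝ) (X0 : ℝ) (ρ0 : ℝ → ℝ) (X : ℝ) (ρ : ℝ → ℝ) : Prop :=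
  MemAdmSet X ρ ∧
  ∀ Y : ℝ, ∀ σ : ℝ → ℝ, MemAdmSet Y σ →
    Jfun lam α β θ τ Kτ mτ X0 ρ0 X ρ ≤ Jfun lam α β θ τ Kτ mτ X0 ρ0 Y σ

/-- Hypothesis (H2) on the initial data `(X⁰, ρ⁰)`, with bounds `ρ_min, ρ_max`
and with `ρ0'` a derivative of `ρ⁰` on `[0,X⁰]` witnessing `C^{1,1}` regularity. -/
def H2 (β θ X0 ρmin ρmax : ℝ) (ρ0 ρ0' : ℝ → ℝ) : Prop :=
  0 < X0 ∧
  (∀ x : ℝ, 0 < ρ0 x) ∧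
  (∀ x ∈ Icc 0 X0, HasDerivWithinAt ρ0 (ρ0' x) (Icc 0 X0) x) ∧
  (∃ K : NNReal, LipschitzOnWith K ρ0' (Icc 0 X0)) ∧
  (∀ x : ℝ, X0 < x → ρ0 x = 1) ∧
  ρ0 0 ∈ Icc (rhoMinus β θ) (rhoPlus β θ) ∧
  0 < ρmin ∧ (∀ x ∈ Ioc 0 X0, ρmin ≤ ρ0 x ∧ ρ0 x ≤ ρmax) ∧ ρmax ≤ 1

/-- The monotone transport structure in the case `M(ρ,ρ⁰) ≥ 0`: a nondecreasing map
`T₊ : [0,X] → [0,X]`, vanishing on `[0,ℓ₊]`, pushing `ρ·Leb⌊(ℓ₊,X)` to `ρ⁰·Leb⌊(0,X)`,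
with `M = ∫₀^{ℓ₊} ρ` and realizing the squared Wasserstein distance. -/
def TransportPlus (ρ0 ρ : ℝ → ℝ) (X : ℝ) (T : ℝ → ℝ) (ℓ : ℝ) : Prop :=
  0 ≤ ℓ ∧ Measurable T ∧ MonotoneOn T (Icc 0 X) ∧
  (∀ x ∈ Icc 0 X, T x ∈ Icc 0 X) ∧
  (∀ x ∈ Icc 0 ℓ, T x = 0) ∧ T X = X ∧
  Measure.map T ((volume.withDensity (fun x => ENNReal.ofReal (ρ x))).restrict (Ioo ℓ X))
    = (volume.withDensity (fun x => ENNReal.ofReal (ρ0 x))).restrict (Ioo 0 X) ∧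
  Mdiff ρ ρ0 = ∫ x in (0:ℝ)..ℓ, ρ x ∧
  W2sq ρ ρ0 = ∫ x in (0:ℝ)..X, (x - T x)^2 * ρ x

/-- The monotone transport structure in the case `M(ρ,ρ⁰) < 0`. -/
def TransportMinus (ρ0 ρ : ℝ → ℝ) (X : ℝ) (T : ℝ → ℝ) (ℓ : ℝ) : Prop :=
  0 < ℓ ∧ Measurable T ∧ MonotoneOn T (Icc 0 X) ∧
  (∀ x ∈ Icc 0 X, T x ∈ Icc ℓ X) ∧
  T 0 = ℓ ∧ T X = X ∧
  Measure.map T ((volume.withDensity (fun x => ENNReal.ofReal (ρ x))).restrict (Ioo 0 X))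
    = (volume.withDensity (fun x => ENNReal.ofReal (ρ0 x))).restrict (Ioo ℓ X) ∧
  -(Mdiff ρ ρ0) = ∫ y in (0:ℝ)..ℓ, ρ0 y ∧
  W2sq ρ ρ0 = (∫ x in (0:ℝ)..X, (x - T x)^2 * ρ x) + ∫ y in (0:ℝ)..ℓ, y^2 * ρ0 y

/-- Transport structure with sign convention: `T` is `T₊` (with some `ℓ₊`, and `ℓ₋ = ℓ`
is taken `= 0`) when `M ≥ 0`, and `T₋` with `ℓ₋ = ℓ > 0` when `M < 0`. -/
def TransportStruct (ρ0 ρ : ℝ → ℝ) (X : ℝ) (T : ℝ → ℝ) (ℓ : ℝ) : Prop :=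
  (0 ≤ Mdiff ρ ρ0 ∧ ℓ = 0 ∧ ∃ ℓp : ℝ, TransportPlus ρ0 ρ X T ℓp) ∨
  (Mdiff ρ ρ0 < 0 ∧ TransportMinus ρ0 ρ X T ℓ)

/-- `ρ̄` is the continuous representative of `ρ` on `[0,X]`. -/
def ContRep (X : ℝ) (ρ ρb : ℝ → ℝ) : Prop :=
  ContinuousOn ρb (Icc 0 X) ∧ (∀ᵐ x : ℝ, x ∈ Ioo 0 X → ρ x = ρb x)


/-! ### Measures with density and the class of admissible densities -/

/-- The measure `ρ · Leb⌊s` in the form in which it enters `nuMeas`; only the positive part of `ρ`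
contributes. -/
def densOn (ρ : ℝ → ℝ) (s : Set ℝ) : Measure ℝ :=
  (volume.withDensity (fun x => ENNReal.ofReal (ρ x))).restrict s

lemma densOn_eq (ρ : ℝ → ℝ) {s : Set ℝ} (hs : MeasurableSet s) :
    densOn ρ s = (volume.restrict s).withDensity (fun x => ENNReal.ofReal (ρ x)) :=
  restrict_withDensity hs _

lemma densOn_apply (ρ : ℝ → ℝ) {s A : Set ℝ} (hs : MeasurableSet s) (hA : MeasurableSet A) :
    densOn ρ s A = ∫⁻ x in A ∩ s, ENNReal.ofReal (ρ x) := by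
  rw [densOn_eq ρ hs, withDensity_apply _ hA, Measure.restrict_restrict hA]

lemma densOn_absCont (ρ : ℝ → ℝ) {s : Set ℝ} (hs : MeasurableSet s) :
    densOn ρ s ≪ volume.restrict s := by
  rw [densOn_eq ρ hs]; exact withDensity_absolutelyContinuous _ _

lemma densOn_congr {ρ ρ' : ℝ → ℝ} {s : Set ℝ} (hs : MeasurableSet s)
    (h : ∀ᵐ x ∂volume.restrict s, ρ x = ρ' x) : densOn ρ s = densOn ρ' s := by
  rw [densOn_eq ρ hs, densOn_eq ρ' hs]
  apply withDensity_congr_ae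
  filter_upwards [h] with x hx
  rw [hx]

lemma densOn_one {s : Set ℝ} (hs : MeasurableSet s) :
    densOn (fun _ => 1) s = volume.restrict s := by
  rw [densOn_eq _ hs]
  simp

lemma densOn_congr_set (ρ : ℝ → ℝ) {s t : Set ℝ} (h : s =ᵐ[volume] t) :
    densOn ρ s = densOn ρ t := by
  apply Measure.restrict_congr_set
  exact (withDensity_absolutelyContinuous _ _).ae_eq h

/-- Splitting of `ρ · Leb⌊(a,c)` at an intermediate point, which carries no mass. -/
lemma densOn_split (ρ : ℝ → ℝ) {a b c : ℝ} (hab : a ≤ b) (hbc : b ≤ c) :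
    densOn ρ (Ioo a c) = densOn ρ (Ioo a b) + densOn ρ (Ioo b c) := by
  rw [densOn_congr_set ρ (Ioo_ae_eq_Ioc (a := a) (b := c)),
    densOn_congr_set ρ (Ioo_ae_eq_Ioc (a := a) (b := b)),
    densOn_congr_set ρ (Ioo_ae_eq_Ioc (a := b) (b := c))]
  unfold densOn
  rw [← Measure.restrict_union (Ioc_disjoint_Ioc_of_le le_rfl) measurableSet_Ioc,
    Ioc_union_Ioc_eq_Ioc hab hbc]

lemma densOn_univ (ρ : ℝ → ℝ) {s : Set ℝ} (hs : MeasurableSet s) :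
    densOn ρ s univ = ∫⁻ x in s, ENNReal.ofReal (ρ x) := by
  rw [densOn_apply ρ hs MeasurableSet.univ, univ_inter]

lemma densOn_univ_eq_integral {ρ : ℝ → ℝ} {s : Set ℝ} (hs : MeasurableSet s)
    (hi : IntegrableOn ρ s) (h0 : ∀ᵐ x ∂volume.restrict s, 0 ≤ ρ x) :
    densOn ρ s univ = ENNReal.ofReal (∫ x in s, ρ x) := by
  rw [densOn_univ ρ hs, ofReal_integral_eq_lintegral_ofReal hi h0]

lemma densOn_finite {ρ : ℝ → ℝ} {s : Set ℝ} (hs : MeasurableSet s) (hi : IntegrableOn ρ s) :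
    IsFiniteMeasure (densOn ρ s) := by
  constructor
  rw [densOn_univ ρ hs]
  exact (lintegral_ofReal_le_lintegral_enorm _).trans_lt hi.2

lemma integrableOn_of_densOn {ρ : ℝ → ℝ} {s : Set ℝ} (hs : MeasurableSet s)
    (hm : AEStronglyMeasurable ρ (volume.restrict s))
    (h0 : ∀ᵐ x ∂volume.restrict s, 0 ≤ ρ x) (hf : densOn ρ s univ < ∞) : IntegrableOn ρ s := by
  rw [densOn_univ ρ hs] at hf
  exact ⟨hm, (hasFiniteIntegral_iff_ofReal h0).2 hf⟩

lemma integral_densOn {ρ : ℝ → ℝ} {s : Set ℝ} (hs : MeasurableSet s)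
    (hm : AEStronglyMeasurable ρ (volume.restrict s))
    (h0 : ∀ᵐ x ∂volume.restrict s, 0 ≤ ρ x) (F : ℝ → ℝ) :
    ∫ x, F x ∂(densOn ρ s) = ∫ x in s, F x * ρ x := by
  rw [densOn_eq ρ hs, integral_withDensity_eq_integral_toReal_smul₀
    hm.aemeasurable.ennreal_ofReal (by simp)]
  apply integral_congr_ae
  filter_upwards [h0] with x hx
  rw [ENNReal.toReal_ofReal hx, smul_eq_mul, mul_comm]

lemma integrable_densOn {ρ : ℝ → ℝ} {s : Set ℝ} (hs : MeasurableSet s)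
    (hi : IntegrableOn ρ s) {F : ℝ → ℝ} (hF : Measurable F) {C : ℝ}
    (hC : ∀ x ∈ s, |F x| ≤ C) : Integrable F (densOn ρ s) := by
  have := densOn_finite hs hi
  refine Integrable.of_bound hF.aestronglyMeasurable C ?_
  have : ∀ᵐ x ∂volume.restrict s, ‖F x‖ ≤ C := by
    filter_upwards [ae_restrict_mem hs] with x hx
    exact hC x hx
  exact (densOn_absCont ρ hs).ae_le this

lemma integrableOn_bdd_mul {ρ : ℝ → ℝ} {s : Set ℝ} (hs : MeasurableSet s)
    (hi : IntegrableOn ρ s) {F : ℝ → ℝ} (hF : Measurable F) {C : ℝ}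
    (hC : ∀ x ∈ s, |F x| ≤ C) : IntegrableOn (fun x => F x * ρ x) s := by
  refine Integrable.bdd_mul (c := C) hi hF.aestronglyMeasurable ?_
  filter_upwards [ae_restrict_mem hs] with x hx
  exact hC x hx

lemma xA_nonneg (ρ : ℝ → ℝ) : 0 ≤ xA ρ :=
  Real.sInf_nonneg fun _ hx => hx.1.le

lemma xA_le {ρ : ℝ → ℝ} {x : ℝ} (hx : 0 < x) (h : ∀ᵐ y : ℝ, y ∈ Ioi x → ρ y = 1) :
    xA ρ ≤ x :=
  csInf_le ⟨0, fun _ hy => hy.1.le⟩ ⟨hx, h⟩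

/-- The infimum defining `xA` is attained, up to the sign condition. -/
lemma ae_eq_one_of_xA {ρ : ℝ → ℝ} (hne : ∃ x : ℝ, 0 < x ∧ (∀ᵐ y : ℝ, y ∈ Ioi x → ρ y = 1)) :
    ∀ᵐ y : ℝ, y ∈ Ioi (xA ρ) → ρ y = 1 := by
  have h : ∀ n : ℕ, ∀ᵐ y : ℝ, y ∈ Ioi (xA ρ + 1 / ((n : ℝ) + 1)) → ρ y = 1 := by
    intro n
    have hp : 0 < 1 / ((n : ℝ) + 1) := by positivity
    obtain ⟨a, ⟨_, ha⟩, hlt⟩ := exists_lt_of_csInf_lt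
      (s := {x : ℝ | 0 < x ∧ ∀ᵐ y : ℝ, y ∈ Ioi x → ρ y = 1}) hne
      (show sInf _ < xA ρ + 1 / ((n : ℝ) + 1) from lt_add_of_pos_right _ hp)
    filter_upwards [ha] with y hy hy'
    exact hy (hlt.trans hy')
  filter_upwards [ae_all_iff.2 h] with y hy hy'
  obtain ⟨n, hn⟩ := exists_nat_one_div_lt (sub_pos.2 (mem_Ioi.1 hy'))
  exact hy n (by simp only [mem_Ioi]; linarith)

/-- Cancellation of a finite measure in an identity between measures. -/
lemma measure_add_cancel {μ ν κ : Measure ℝ} [IsFiniteMeasure κ] (h : μ + κ = ν + κ) : μ = ν := by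
  ext A _
  have := congrArg (fun m : Measure ℝ => m A) h
  simp only [Measure.add_apply] at this
  exact (ENNReal.add_left_inj (measure_ne_top κ A)).1 this

/-! ### Monotone transport plans and an upper bound for the Wasserstein distance -/

/-- A density on `ℝ₊` of finite mass on `(0,X)` that is a.e. equal to `1` beyond `X`. -/
structure FiniteDens (X : ℝ) (ρ : ℝ → ℝ) : Prop where
  nonneg : ∀ᵐ x ∂volume.restrict (Ioi (0:ℝ)), 0 ≤ ρ x
  int : IntegrableOn ρ (Ioo 0 X)
  after : ∀ᵐ y : ℝ, y ∈ Ioi X → ρ y = 1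

/-- The common form of the two transport structures. The map `T` pushes `ρ · Leb⌊(0,X)` to
`ρ⁰ · Leb⌊(ℓ,X)` plus an atom of mass `m₊` at `0`, and the mass of `ρ⁰` on `(0,ℓ)` is `m₋`; thus
`ℓ = 0` if `m ≥ 0`, and there is no atom if `m < 0`. -/
structure TPlan (ρ0 ρ : ℝ → ℝ) (X : ℝ) (T : ℝ → ℝ) (ℓ m : ℝ) : Prop where
  l_nonneg : 0 ≤ ℓ
  l_le : ℓ ≤ X
  meas : Measurable T
  mono : MonotoneOn T (Icc 0 X)
  maps : ∀ x ∈ Icc 0 X, T x ∈ Icc ℓ X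
  push : (densOn ρ (Ioo 0 X)).map T
    = densOn ρ0 (Ioo ℓ X) + ENNReal.ofReal m • Measure.dirac 0
  deficit : densOn ρ0 (Ioo 0 ℓ) univ = ENNReal.ofReal (-m)

lemma FiniteDens.nonneg_Ioo {X : ℝ} {ρ : ℝ → ℝ} (h : FiniteDens X ρ) {a b : ℝ} (ha : 0 ≤ a) :
    ∀ᵐ x ∂volume.restrict (Ioo a b), 0 ≤ ρ x :=
  ae_restrict_of_ae_restrict_of_subset (fun _ hx => ha.trans_lt hx.1) h.nonneg

lemma lintegral_Ioo_of_one {ρ : ℝ → ℝ} {Λ a b : ℝ} (h : ∀ᵐ y : ℝ, y ∈ Ioi Λ → ρ y = 1)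
    (ha : Λ ≤ a) : ∫⁻ x in Ioo a b, ENNReal.ofReal (ρ x) = ENNReal.ofReal (b - a) := by
  have : ∀ᵐ x ∂volume.restrict (Ioo a b), ENNReal.ofReal (ρ x) = 1 := by
    filter_upwards [ae_restrict_mem measurableSet_Ioo, ae_restrict_of_ae h] with x hx h1
    rw [h1 (ha.trans_lt hx.1)]; simp
  rw [lintegral_congr_ae this]
  simp

lemma densOn_of_one {ρ : ℝ → ℝ} {Λ b : ℝ} (h : ∀ᵐ y : ℝ, y ∈ Ioi Λ → ρ y = 1) :
    densOn ρ (Ioo Λ b) = volume.restrict (Ioo Λ b) := by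
  rw [← densOn_one measurableSet_Ioo]
  apply densOn_congr measurableSet_Ioo
  filter_upwards [ae_restrict_mem measurableSet_Ioo, ae_restrict_of_ae h] with x hx h1
  exact h1 hx.1

/-- Where both densities are `1` up to the right end point, a monotone transport map is the
identity: otherwise it would carry a mass `X - x` into an interval of length less than `X - x`,
or conversely. -/
lemma TPlan.eq_id {ρ0 σ S : ℝ → ℝ} {X ℓ m Λ : ℝ} (hp : TPlan ρ0 σ X S ℓ m) (hΛ : 0 ≤ Λ)
    (h0 : ∀ᵐ y : ℝ, y ∈ Ioi Λ → ρ0 y = 1) (hσ : ∀ᵐ y : ℝ, y ∈ Ioi Λ → σ y = 1) :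
    ∀ x ∈ Ioo Λ X, S x = x := by
  intro x hx
  have hx0 : 0 < x := hΛ.trans_lt hx.1
  have hxI : x ∈ Icc 0 X := ⟨hx0.le, hx.2.le⟩
  have hSx := hp.maps x hxI
  have key : ∀ y, 0 < y → densOn σ (Ioo 0 X) (S ⁻¹' (Ioi y))
      = ∫⁻ z in Ioi y ∩ Ioo ℓ X, ENNReal.ofReal (ρ0 z) := by
    intro y hy
    rw [← Measure.map_apply hp.meas measurableSet_Ioi, hp.push, Measure.add_apply,
      densOn_apply _ measurableSet_Ioo measurableSet_Ioi, Measure.smul_apply,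
      Measure.dirac_apply' _ measurableSet_Ioi]
    simp [hy.le]
  have hmeas : ∀ y, MeasurableSet (S ⁻¹' (Ioi y)) := fun y => hp.meas measurableSet_Ioi
  rcases lt_trichotomy (S x) x with hlt | heq | hgt
  · exfalso
    obtain ⟨y, hy1, hy2⟩ := exists_between (max_lt hlt hx.1)
    have hSy : S x < y := (le_max_left _ _).trans_lt hy1
    have hΛy : Λ < y := (le_max_right _ _).trans_lt hy1
    have hk := key y (hΛ.trans_lt hΛy)
    have hs : Ioi y ∩ Ioo ℓ X = Ioo y X := by
      ext z
      simp only [mem_inter_iff, mem_Ioi, mem_Ioo]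
      exact ⟨fun h => ⟨h.1, h.2.2⟩, fun h => ⟨h.1, (hSx.1.trans_lt hSy).trans h.1, h.2⟩⟩
    rw [hs, lintegral_Ioo_of_one h0 hΛy.le, densOn_apply _ measurableSet_Ioo (hmeas y)] at hk
    have hsub : S ⁻¹' Ioi y ∩ Ioo 0 X ⊆ Ioo x X := by
      rintro z ⟨hz1, hz2⟩
      refine ⟨?_, hz2.2⟩
      by_contra hcon
      have := hp.mono ⟨hz2.1.le, hz2.2.le⟩ hxI (not_lt.1 hcon)
      have hz1' : y < S z := hz1
      linarith
    have := lintegral_mono_set (μ := volume) (f := fun z => ENNReal.ofReal (σ z)) hsub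
    rw [hk, lintegral_Ioo_of_one hσ hx.1.le,
      ENNReal.ofReal_le_ofReal_iff (by linarith [hx.2])] at this
    linarith
  · exact heq
  · exfalso
    obtain ⟨y, hy1, hy2⟩ := exists_between hgt
    have hk := key y (hx0.trans hy1)
    have hs : Ioi y ∩ Ioo ℓ X ⊆ Ioo y X := fun z hz => ⟨hz.1, hz.2.2⟩
    have hle := lintegral_mono_set (μ := volume) (f := fun z => ENNReal.ofReal (ρ0 z)) hs
    rw [← hk, lintegral_Ioo_of_one h0 (hx.1.trans hy1).le,
      densOn_apply _ measurableSet_Ioo (hmeas y)] at hle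
    have hsub : Ioo x X ⊆ S ⁻¹' Ioi y ∩ Ioo 0 X := by
      intro z hz
      refine ⟨?_, hx0.trans hz.1, hz.2⟩
      exact hy2.trans_le (hp.mono hxI ⟨(hx0.trans hz.1).le, hz.2.le⟩ hz.1.le)
    have := (lintegral_mono_set (μ := volume) (f := fun z => ENNReal.ofReal (σ z)) hsub).trans hle
    rw [lintegral_Ioo_of_one hσ hx.1.le,
      ENNReal.ofReal_le_ofReal_iff (by linarith [hSx.2])] at this
    linarith

/-- Every monotone plan bounds the Wasserstein distance by its cost. Since `nuMeas` only sees
`(0,Λ)` with `Λ = max (xA σ) (xA ρ⁰)`, the identity part of the plan on `(Λ,X)` is removed. -/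
lemma W2sq_le {ρ0 σ S : ℝ → ℝ} {X ℓ : ℝ} (h0 : FiniteDens X ρ0)
    (hσ : FiniteDens X σ) (hX0 : xA ρ0 ≤ X) (hXσ : xA σ ≤ X)
    (h0e : ∀ᵐ y : ℝ, y ∈ Ioi (xA ρ0) → ρ0 y = 1) (hσe : ∀ᵐ y : ℝ, y ∈ Ioi (xA σ) → σ y = 1)
    (hp : TPlan ρ0 σ X S ℓ (Mdiff σ ρ0)) :
    W2sq σ ρ0 ≤ (∫ x in Ioo 0 X, (x - S x) ^ 2 * σ x) + ∫ y in Ioo 0 ℓ, y ^ 2 * ρ0 y := by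
  set Λ := max (xA σ) (xA ρ0) with hΛdef
  have hΛ0 : 0 ≤ Λ := (xA_nonneg σ).trans (le_max_left _ _)
  have hΛX : Λ ≤ X := max_le hXσ hX0
  have h0Λ : ∀ᵐ y : ℝ, y ∈ Ioi Λ → ρ0 y = 1 := by
    filter_upwards [h0e] with y hy hy'
    exact hy (mem_Ioi.2 ((le_max_right _ _).trans_lt (mem_Ioi.1 hy')))
  have hσΛ : ∀ᵐ y : ℝ, y ∈ Ioi Λ → σ y = 1 := by
    filter_upwards [hσe] with y hy hy'
    exact hy (mem_Ioi.2 ((le_max_left _ _).trans_lt (mem_Ioi.1 hy')))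
  have hid := hp.eq_id hΛ0 h0Λ hσΛ
  have hℓΛ : ℓ ≤ Λ := by
    by_contra hcon
    rw [not_le] at hcon
    obtain ⟨x, hx1, hx2⟩ := exists_between hcon
    have hxX : x < X := hx2.trans_le hp.l_le
    have h1 := hid x ⟨hx1, hxX⟩
    have h2 := (hp.maps x ⟨(hΛ0.trans_lt hx1).le, hxX.le⟩).1
    linarith
  have hpush : (densOn σ (Ioo 0 Λ)).map S
      = densOn ρ0 (Ioo ℓ Λ) + ENNReal.ofReal (Mdiff σ ρ0) • Measure.dirac 0 := by
    have h1 := hp.push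
    rw [densOn_split σ hΛ0 hΛX, densOn_split ρ0 hℓΛ hΛX, Measure.map_add _ _ hp.meas,
      densOn_of_one h0Λ, densOn_of_one hσΛ] at h1
    have h2 : (volume.restrict (Ioo Λ X)).map S = volume.restrict (Ioo Λ X) := by
      have : S =ᵐ[volume.restrict (Ioo Λ X)] id := by
        filter_upwards [ae_restrict_mem measurableSet_Ioo] with x hx
        exact hid x hx
      rw [Measure.map_congr this, Measure.map_id]
    rw [h2] at h1
    have : IsFiniteMeasure (volume.restrict (Ioo Λ X)) := by infer_instance
    apply measure_add_cancel (κ := volume.restrict (Ioo Λ X))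
    rw [h1]
    abel
  have hmgS : Measurable (fun x : ℝ => (x, S x)) := measurable_id.prodMk hp.meas
  have hmg0 : Measurable (fun y : ℝ => ((0:ℝ), y)) := measurable_const.prodMk measurable_id
  set γ : Measure (ℝ × ℝ) := (densOn σ (Ioo 0 Λ)).map (fun x => (x, S x))
    + (densOn ρ0 (Ioo 0 ℓ)).map (fun y => ((0:ℝ), y)) with hγ
  have hint0 : IntegrableOn ρ0 (Ioo 0 ℓ) := h0.int.mono_set (Ioo_subset_Ioo_right hp.l_le)
  have hintσ : IntegrableOn σ (Ioo 0 Λ) := hσ.int.mono_set (Ioo_subset_Ioo_right hΛX)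
  have hcS : Measurable (fun x : ℝ => (x - S x) ^ 2) := (measurable_id.sub hp.meas).pow_const 2
  have hbS : ∀ x ∈ Ioo 0 X, |(x - S x) ^ 2| ≤ X ^ 2 := by
    intro x hx
    have := hp.maps x ⟨hx.1.le, hx.2.le⟩
    have h1 : |x - S x| ≤ X := abs_le.2 ⟨by linarith [this.2, hx.1],
      by linarith [this.1, hx.2, hp.l_nonneg]⟩
    rw [abs_pow]
    exact pow_le_pow_left₀ (abs_nonneg _) h1 2
  have hsubΛ : Ioo 0 Λ ⊆ Ioo 0 X := Ioo_subset_Ioo_right hΛX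
  have hcost : ∫ p, (p.1 - p.2) ^ 2 ∂γ
      = (∫ x in Ioo 0 Λ, (x - S x) ^ 2 * σ x) + ∫ y in Ioo 0 ℓ, y ^ 2 * ρ0 y := by
    have hmc : Measurable (fun p : ℝ × ℝ => (p.1 - p.2) ^ 2) :=
      (measurable_fst.sub measurable_snd).pow_const 2
    have hb0 : ∀ y ∈ Ioo 0 ℓ, |(0 - y) ^ 2| ≤ ℓ ^ 2 := by
      intro y hy
      rw [zero_sub, neg_sq, abs_of_nonneg (sq_nonneg y)]
      exact pow_le_pow_left₀ hy.1.le hy.2.le 2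
    rw [hγ, integral_add_measure, integral_map hmgS.aemeasurable hmc.aestronglyMeasurable,
      integral_map hmg0.aemeasurable hmc.aestronglyMeasurable]
    · simp only
      rw [integral_densOn measurableSet_Ioo hintσ.1 (hσ.nonneg_Ioo le_rfl),
        integral_densOn measurableSet_Ioo hint0.1 (h0.nonneg_Ioo le_rfl)]
      simp only [zero_sub, neg_sq]
    · rw [integrable_map_measure hmc.aestronglyMeasurable hmgS.aemeasurable]
      exact integrable_densOn measurableSet_Ioo hintσ hcS (fun x hx => hbS x (hsubΛ hx))
    · rw [integrable_map_measure hmc.aestronglyMeasurable hmg0.aemeasurable]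
      exact integrable_densOn measurableSet_Ioo hint0
        ((measurable_const.sub measurable_id).pow_const 2) hb0
  have hle : W2sq σ ρ0 ≤ ∫ p, (p.1 - p.2) ^ 2 ∂γ := by
    apply csInf_le
    · refine ⟨0, ?_⟩
      rintro r ⟨γ', -, -, rfl⟩
      exact integral_nonneg fun p => sq_nonneg _
    · refine ⟨γ, ?_, ?_, rfl⟩
      · rw [hγ, Measure.map_add _ _ measurable_fst, Measure.map_map measurable_fst hmgS,
          Measure.map_map measurable_fst hmg0]
        have e1 : (Prod.fst ∘ fun x : ℝ => (x, S x)) = id := rfl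
        have e2 : (Prod.fst ∘ fun y : ℝ => ((0:ℝ), y)) = fun _ => 0 := rfl
        rw [e1, e2, Measure.map_id, Measure.map_const, hp.deficit]
        have : Mdiff ρ0 σ = -Mdiff σ ρ0 := by unfold Mdiff; ring
        rw [nuMeas, this, ← hΛdef]
        rfl
      · rw [hγ, Measure.map_add _ _ measurable_snd, Measure.map_map measurable_snd hmgS,
          Measure.map_map measurable_snd hmg0]
        have e1 : (Prod.snd ∘ fun x : ℝ => (x, S x)) = S := rfl
        have e2 : (Prod.snd ∘ fun y : ℝ => ((0:ℝ), y)) = id := rfl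
        rw [e1, e2, Measure.map_id, hpush, nuMeas, max_comm, ← hΛdef]
        change _ = densOn ρ0 (Ioo 0 Λ) + _
        rw [densOn_split ρ0 hp.l_nonneg hℓΛ]
        abel
  refine hle.trans ?_
  rw [hcost]
  gcongr
  · filter_upwards [hσ.nonneg_Ioo le_rfl] with x hx
    exact mul_nonneg (sq_nonneg _) hx
  · exact integrableOn_bdd_mul measurableSet_Ioo hσ.int hcS hbS

/-! ### Reparametrization of a density by a diffeomorphism supported in `(0,X)` -/

/-- An increasing `C¹` diffeomorphism of the line, with derivative `Ψ'`, equal to the identity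
outside `(0,X)`. -/
structure IsReparam (X : ℝ) (Ψ Ψ' : ℝ → ℝ) : Prop where
  deriv : ∀ x, HasDerivAt Ψ (Ψ' x) x
  pos : ∀ x, 0 < Ψ' x
  cont : Continuous Ψ'
  off : ∀ x, x ∉ Ioo 0 X → Ψ x = x ∧ Ψ' x = 1

/-- The density `(ρ ∘ Ψ) Ψ'` of the image of `ρ · Leb` under `Ψ⁻¹`. Parametrizing the competitor by
the inverse map avoids inverting `id + ε ζ`. -/
def reparam (ρ Ψ Ψ' : ℝ → ℝ) : ℝ → ℝ := fun y => ρ (Ψ y) * Ψ' y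

namespace IsReparam

variable {X : ℝ} {Ψ Ψ' : ℝ → ℝ}

lemma continuous (h : IsReparam X Ψ Ψ') : Continuous Ψ :=
  continuous_iff_continuousAt.2 fun x => (h.deriv x).continuousAt

lemma strictMono (h : IsReparam X Ψ Ψ') : StrictMono Ψ :=
  strictMono_of_deriv_pos fun x => by rw [(h.deriv x).deriv]; exact h.pos x

lemma map_zero (h : IsReparam X Ψ Ψ') : Ψ 0 = 0 := (h.off 0 (by simp)).1

lemma map_end (h : IsReparam X Ψ Ψ') : Ψ X = X := (h.off X (by simp)).1

lemma mem_Ioo (h : IsReparam X Ψ Ψ') {y : ℝ} (hy : y ∈ Ioo 0 X) : Ψ y ∈ Ioo 0 X :=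
  ⟨h.map_zero ▸ h.strictMono hy.1, (h.strictMono hy.2).trans_eq h.map_end⟩

lemma mem_Icc (h : IsReparam X Ψ Ψ') {y : ℝ} (hy : y ∈ Icc 0 X) : Ψ y ∈ Icc 0 X :=
  ⟨h.map_zero ▸ h.strictMono.monotone hy.1, (h.strictMono.monotone hy.2).trans_eq h.map_end⟩

lemma image_Ioo (h : IsReparam X Ψ Ψ') (hX : 0 < X) : Ψ '' Ioo 0 X = Ioo 0 X := by
  apply Subset.antisymm
  · rintro _ ⟨y, hy, rfl⟩
    exact h.mem_Ioo hy
  · have := intermediate_value_Ioo hX.le h.continuous.continuousOn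
    rwa [h.map_zero, h.map_end] at this

lemma image_inter (h : IsReparam X Ψ Ψ') (hX : 0 < X) (A : Set ℝ) :
    Ψ '' (Ψ ⁻¹' A ∩ Ioo 0 X) = A ∩ Ioo 0 X := by
  rw [image_preimage_inter, h.image_Ioo hX]

lemma lintegral_eq (h : IsReparam X Ψ Ψ') (hX : 0 < X) {A : Set ℝ} (hA : MeasurableSet A)
    (g : ℝ → ℝ≥0∞) :
    ∫⁻ x in Ψ ⁻¹' A ∩ Ioo 0 X, ENNReal.ofReal (Ψ' x) * g (Ψ x) = ∫⁻ x in A ∩ Ioo 0 X, g x := by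
  rw [← h.image_inter hX A, lintegral_image_eq_lintegral_abs_deriv_mul
    ((h.continuous.measurable hA).inter measurableSet_Ioo)
    (fun x _ => (h.deriv x).hasDerivWithinAt) h.strictMono.injective.injOn g]
  simp only [fun x => abs_of_pos (h.pos x)]

lemma map_densOn (h : IsReparam X Ψ Ψ') (hX : 0 < X) (ρ : ℝ → ℝ) :
    (densOn (reparam ρ Ψ Ψ') (Ioo 0 X)).map Ψ = densOn ρ (Ioo 0 X) := by
  ext A hA
  rw [Measure.map_apply h.continuous.measurable hA, densOn_apply _ measurableSet_Ioo hA,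
    densOn_apply _ measurableSet_Ioo (h.continuous.measurable hA), ← h.lintegral_eq hX hA]
  congr 1
  ext x
  rw [reparam, mul_comm, ENNReal.ofReal_mul (h.pos x).le]

lemma integrableOn_iff (h : IsReparam X Ψ Ψ') (hX : 0 < X) (F : ℝ → ℝ) :
    IntegrableOn (fun y => F (Ψ y) * Ψ' y) (Ioo 0 X) ↔ IntegrableOn F (Ioo 0 X) := by
  have := integrableOn_image_iff_integrableOn_abs_deriv_smul (s := Ioo 0 X) measurableSet_Ioo
    (fun x _ => (h.deriv x).hasDerivWithinAt) h.strictMono.injective.injOn F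
  rw [h.image_Ioo hX] at this
  rw [this]
  simp only [fun x => abs_of_pos (h.pos x), smul_eq_mul, mul_comm]

lemma integral_eq (h : IsReparam X Ψ Ψ') (hX : 0 < X) (F : ℝ → ℝ) :
    ∫ y in Ioo 0 X, F (Ψ y) * Ψ' y = ∫ y in Ioo 0 X, F y := by
  have := integral_image_eq_integral_abs_deriv_smul (s := Ioo 0 X) measurableSet_Ioo
    (fun x _ => (h.deriv x).hasDerivWithinAt) h.strictMono.injective.injOn F
  rw [h.image_Ioo hX] at this
  rw [this]
  simp only [fun x => abs_of_pos (h.pos x), smul_eq_mul, mul_comm]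

lemma locallyIntegrableOn (h : IsReparam X Ψ Ψ') {F : ℝ → ℝ}
    (hF : LocallyIntegrableOn F (Ioi 0)) :
    LocallyIntegrableOn (fun y => F (Ψ y) * Ψ' y) (Ioi 0) := by
  rw [locallyIntegrableOn_iff isOpen_Ioi.isLocallyClosed] at hF ⊢
  intro k hk hkc
  have h1 := hF (Ψ '' k) (by
    rintro _ ⟨y, hy, rfl⟩
    have := h.strictMono (hk hy)
    rwa [h.map_zero] at this) (hkc.image h.continuous)
  have := (integrableOn_image_iff_integrableOn_abs_deriv_smul (s := k) hkc.measurableSet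
    (fun x _ => (h.deriv x).hasDerivWithinAt) h.strictMono.injective.injOn F).1 h1
  simpa only [fun x => abs_of_pos (h.pos x), smul_eq_mul, mul_comm] using this

lemma ae_comp (h : IsReparam X Ψ Ψ') (hX : 0 < X) {P : ℝ → Prop} (hP : ∀ᵐ x : ℝ, P x) :
    ∀ᵐ x : ℝ, P (Ψ x) := by
  set B := toMeasurable volume {x | ¬ P x} with hB
  have hBm : MeasurableSet B := measurableSet_toMeasurable _ _
  have hB0 : volume B = 0 := by rw [hB, measure_toMeasurable]; exact hP
  have hPB : ∀ x, x ∉ B → P x := fun x hx => by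
    by_contra hc
    exact hx (subset_toMeasurable _ _ hc)
  have h1 : ∀ᵐ x ∂volume.restrict (Ioo 0 X), P (Ψ x) := by
    have h2 := h.lintegral_eq hX (A := B) hBm (fun _ => 1)
    rw [setLIntegral_measure_zero _ _ (measure_mono_null inter_subset_left hB0)] at h2
    simp only [mul_one] at h2
    have hm : MeasurableSet (Ψ ⁻¹' B) := h.continuous.measurable hBm
    rw [← Measure.restrict_restrict hm, lintegral_eq_zero_iff h.cont.measurable.ennreal_ofReal] at h2
    rw [Filter.EventuallyEq, ae_restrict_iff' hm] at h2
    filter_upwards [h2] with x hx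
    apply hPB
    intro hxB
    have := hx hxB
    simp only [Pi.zero_apply, ENNReal.ofReal_eq_zero] at this
    exact absurd this (not_le.2 (h.pos x))
  rw [ae_restrict_iff' measurableSet_Ioo] at h1
  filter_upwards [h1, hP] with x hx hx'
  by_cases hxI : x ∈ Ioo 0 X
  · exact hx hxI
  · rw [(h.off x hxI).1]; exact hx'

lemma reparam_off (h : IsReparam X Ψ Ψ') (ρ : ℝ → ℝ) {x : ℝ} (hx : x ∉ Ioo 0 X) :
    reparam ρ Ψ Ψ' x = ρ x := by
  rw [reparam, (h.off x hx).1, (h.off x hx).2, mul_one]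

lemma finiteDens (h : IsReparam X Ψ Ψ') (hX : 0 < X) {ρ : ℝ → ℝ} (hρ : FiniteDens X ρ) :
    FiniteDens X (reparam ρ Ψ Ψ') where
  nonneg := by
    have h1 := hρ.nonneg
    rw [ae_restrict_iff' measurableSet_Ioi] at h1 ⊢
    filter_upwards [h.ae_comp hX h1] with x hx hx0
    have h2 := h.strictMono hx0
    rw [h.map_zero] at h2
    exact mul_nonneg (hx h2) (h.pos x).le
  int := (h.integrableOn_iff hX ρ).2 hρ.int
  after := by
    filter_upwards [hρ.after] with x hx hxX
    rw [h.reparam_off ρ (fun hc => lt_asymm hc.2 hxX)]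
    exact hx hxX

lemma entropy_eq (h : IsReparam X Ψ Ψ') (ρ : ℝ → ℝ) (y : ℝ) :
    reparam ρ Ψ Ψ' y * Real.log (reparam ρ Ψ Ψ' y)
      = ρ (Ψ y) * Real.log (ρ (Ψ y)) * Ψ' y + Real.log (Ψ' y) * reparam ρ Ψ Ψ' y := by
  unfold reparam
  by_cases h0 : ρ (Ψ y) = 0
  · simp [h0]
  · rw [Real.log_mul h0 (h.pos y).ne']; ring

lemma memAdm (h : IsReparam X Ψ Ψ') (hX : 0 < X) {ρ : ℝ → ℝ} (hρ : MemAdm ρ)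
    (hX1 : ∀ᵐ y : ℝ, y ∈ Ioi X → ρ y = 1) : MemAdm (reparam ρ Ψ Ψ') := by
  obtain ⟨h1, h2, h3, h4⟩ := hρ
  have hlog : Continuous fun y => Real.log (Ψ' y) := h.cont.log fun y => (h.pos y).ne'
  have hL := h.locallyIntegrableOn h2
  refine ⟨?_, hL, ?_, X, hX, ?_⟩
  · filter_upwards [h.ae_comp hX h1] with x hx hx0
    have h2 := h.strictMono hx0
    rw [h.map_zero] at h2
    exact mul_nonneg (hx h2) (h.pos x).le
  · simp only [h.entropy_eq]
    refine LocallyIntegrableOn.add (h.locallyIntegrableOn h3) ?_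
    rw [locallyIntegrableOn_iff isOpen_Ioi.isLocallyClosed] at hL ⊢
    intro k hk hkc
    exact (hL k hk hkc).continuousOn_mul hlog.continuousOn hkc
  · filter_upwards [hX1] with x hx hxX
    rw [h.reparam_off ρ (fun hc => lt_asymm hc.2 hxX)]
    exact hx hxX

lemma Mfun_eq {X : ℝ} {ρ : ℝ → ℝ} (hX : 0 < X) (hρ : FiniteDens X ρ) :
    Mfun ρ = (∫ x in Ioo 0 X, ρ x) - X := by
  have h1 : ∫ x in Ioi (0:ℝ), (1 - ρ x) = ∫ x in Ioc 0 X, (1 - ρ x) := by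
    apply setIntegral_eq_of_subset_of_ae_sdiff_eq_zero measurableSet_Ioi.nullMeasurableSet
      Ioc_subset_Ioi_self
    filter_upwards [hρ.after] with x hx hx'
    have : X < x := by
      by_contra hc
      exact hx'.2 ⟨hx'.1, not_lt.1 hc⟩
    rw [hx this, sub_self]
  rw [Mfun, h1, integral_Ioc_eq_integral_Ioo, integral_sub (by simp) hρ.int]
  simp [hX.le]

lemma Mdiff_eq (h : IsReparam X Ψ Ψ') (hX : 0 < X) {ρ : ℝ → ℝ} (hρ : FiniteDens X ρ)
    (ρ0 : ℝ → ℝ) : Mdiff (reparam ρ Ψ Ψ') ρ0 = Mdiff ρ ρ0 := by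
  unfold Mdiff
  rw [Mfun_eq hX hρ, Mfun_eq hX (h.finiteDens hX hρ)]
  unfold reparam
  rw [h.integral_eq hX ρ]

lemma tplan (h : IsReparam X Ψ Ψ') (hX : 0 < X) {ρ0 ρ T : ℝ → ℝ} {ℓ m : ℝ}
    (hp : TPlan ρ0 ρ X T ℓ m) : TPlan ρ0 (reparam ρ Ψ Ψ') X (T ∘ Ψ) ℓ m where
  l_nonneg := hp.l_nonneg
  l_le := hp.l_le
  meas := hp.meas.comp h.continuous.measurable
  mono := fun _ hx _ hy hxy => hp.mono (h.mem_Icc hx) (h.mem_Icc hy) (h.strictMono.monotone hxy)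
  maps := fun _ hx => hp.maps _ (h.mem_Icc hx)
  push := by
    rw [← Measure.map_map hp.meas h.continuous.measurable, h.map_densOn hX, hp.push]
  deficit := hp.deficit

end IsReparam

/-! ### First variation along inner deformations -/

/-- A vector field `ζ` vanishing outside `(0,X)`, with derivative `ζ'`, such that `B` bounds `ζ`,
`ζ'` and the Lipschitz constants of both. -/
structure IsTestField (X : ℝ) (ζ ζ' : ℝ → ℝ) (B : ℝ) : Prop where
  Bpos : 0 < B
  deriv : ∀ x, HasDerivAt ζ (ζ' x) x
  cont : Continuous ζ'
  off : ∀ x, x ∉ Ioo 0 X → ζ x = 0 ∧ ζ' x = 0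
  bd : ∀ x, |ζ x| ≤ B
  bd' : ∀ x, |ζ' x| ≤ B
  lip : ∀ x y, |ζ x - ζ y| ≤ B * |x - y|
  lip' : ∀ x y, |ζ' x - ζ' y| ≤ B * |x - y|

lemma IsTestField.isReparam {X B ε : ℝ} {ζ ζ' : ℝ → ℝ} (h : IsTestField X ζ ζ' B)
    (hε : |ε| ≤ 1 / (2 * B)) :
    IsReparam X (fun x => x + ε * ζ x) (fun x => 1 + ε * ζ' x) where
  deriv := fun x => (hasDerivAt_id x).add ((h.deriv x).const_mul ε)
  pos := fun x => by
    have h1 : |ε * ζ' x| ≤ 1 / (2 * B) * B := by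
      rw [abs_mul]
      have := h.Bpos
      exact mul_le_mul hε (h.bd' x) (abs_nonneg _) (by positivity)
    have h2 : 1 / (2 * B) * B = 1 / 2 := by
      have := h.Bpos.ne'
      field_simp
    rw [h2] at h1
    linarith [(abs_le.1 h1).1]
  cont := continuous_const.add (continuous_const.mul h.cont)
  off := fun x hx => by simp [(h.off x hx).1, (h.off x hx).2]

lemma eq_zero_of_quadratic {L C ε₀ : ℝ} (h0 : 0 < ε₀)
    (h : ∀ ε : ℝ, |ε| ≤ ε₀ → 0 ≤ ε * L + C * ε ^ 2) : L = 0 := by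
  by_contra hL
  have hLp : 0 < |L| := abs_pos.2 hL
  set t := min (ε₀ / |L|) (1 / (2 * (|C| + 1))) with ht
  have hC : 0 < |C| + 1 := by positivity
  have htp : 0 < t := lt_min (by positivity) (by positivity)
  have h1 : |(-t * L)| ≤ ε₀ := by
    rw [abs_mul, abs_neg, abs_of_pos htp]
    calc t * |L| ≤ ε₀ / |L| * |L| := by gcongr; exact min_le_left _ _
      _ = ε₀ := by field_simp
  have h2 := h _ h1
  have h3 : (|C| + 1) * t ≤ 1 / 2 := by
    calc (|C| + 1) * t ≤ (|C| + 1) * (1 / (2 * (|C| + 1))) := by gcongr; exact min_le_right _ _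
      _ = 1 / 2 := by field_simp
  have h4 : C * t ≤ 1 / 2 := by nlinarith [le_abs_self C]
  have h5 : 0 < L ^ 2 * t := by positivity
  nlinarith

lemma TPlan.dist_le {ρ0 ρ T : ℝ → ℝ} {X ℓ m : ℝ} (hp : TPlan ρ0 ρ X T ℓ m) {x : ℝ}
    (hx : x ∈ Icc 0 X) : |x - T x| ≤ X := by
  have := hp.maps x hx
  exact abs_le.2 ⟨by linarith [this.2, hx.1], by linarith [this.1, hx.2, hp.l_nonneg]⟩

/-- The transport cost of the deformed density, to first order in `ε`. -/
lemma cost_variation {X B ε ℓ m : ℝ} {ζ ζ' ρ0 ρ T : ℝ → ℝ} (hX : 0 < X) (h : IsTestField X ζ ζ' B)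
    (hε : |ε| ≤ 1 / (2 * B)) (hρ : FiniteDens X ρ) (hp : TPlan ρ0 ρ X T ℓ m) :
    ∫ y in Ioo 0 X, (y - (T ∘ fun x => x + ε * ζ x) y) ^ 2
        * reparam ρ (fun x => x + ε * ζ x) (fun x => 1 + ε * ζ' x) y
      ≤ (∫ x in Ioo 0 X, (x - T x) ^ 2 * ρ x) - 2 * ε * (∫ x in Ioo 0 X, ζ x * (x - T x) * ρ x)
        + ε ^ 2 * ((2 * B ^ 2 * X + B ^ 2) * ∫ x in Ioo 0 X, ρ x) := by
  have hr := h.isReparam hε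
  have hζm : Measurable ζ :=
    (continuous_iff_continuousAt.2 fun x => (h.deriv x).continuousAt).measurable
  have hTm : Measurable fun x => x - T x := measurable_id.sub hp.meas
  have hTb : ∀ x ∈ Ioo 0 X, |x - T x| ≤ X := fun x hx => hp.dist_le ⟨hx.1.le, hx.2.le⟩
  have i1 : IntegrableOn (fun x => (x - T x) ^ 2 * ρ x) (Ioo 0 X) :=
    integrableOn_bdd_mul measurableSet_Ioo hρ.int (hTm.pow_const 2) (C := X ^ 2) fun x hx => by
      rw [abs_pow]; exact pow_le_pow_left₀ (abs_nonneg _) (hTb x hx) 2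
  have i2 : IntegrableOn (fun x => ζ x * (x - T x) * ρ x) (Ioo 0 X) :=
    integrableOn_bdd_mul measurableSet_Ioo hρ.int (hζm.mul hTm) (C := B * X) fun x hx => by
      rw [abs_mul]; exact mul_le_mul (h.bd x) (hTb x hx) (abs_nonneg _) h.Bpos.le
  set K := 2 * B ^ 2 * X + B ^ 2 with hK
  set G : ℝ → ℝ := fun x => (x - T x) ^ 2 * ρ x - 2 * ε * (ζ x * (x - T x) * ρ x)
    + ε ^ 2 * (K * ρ x) with hG
  have iG : IntegrableOn G (Ioo 0 X) :=
    (i1.sub (i2.const_mul _)).add ((hρ.int.const_mul K).const_mul _)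
  have eG : ∫ x in Ioo 0 X, G x = (∫ x in Ioo 0 X, (x - T x) ^ 2 * ρ x)
      - 2 * ε * (∫ x in Ioo 0 X, ζ x * (x - T x) * ρ x)
        + ε ^ 2 * (K * ∫ x in Ioo 0 X, ρ x) := by
    have i3 : IntegrableOn (fun x => (x - T x) ^ 2 * ρ x - 2 * ε * (ζ x * (x - T x) * ρ x))
      (Ioo 0 X) := i1.sub (i2.const_mul _)
    rw [hG, integral_add i3 ((hρ.int.const_mul K).const_mul _),
      integral_sub i1 (i2.const_mul _), integral_const_mul, integral_const_mul, integral_const_mul]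
  rw [← eG, ← hr.integral_eq hX G]
  have hσ := hr.finiteDens hX hρ
  apply integral_mono_ae
  · exact integrableOn_bdd_mul measurableSet_Ioo hσ.int
      ((measurable_id.sub (hr.tplan hX hp).meas).pow_const 2) (C := X ^ 2) fun x hx => by
        rw [abs_pow]
        exact pow_le_pow_left₀ (abs_nonneg _) ((hr.tplan hX hp).dist_le ⟨hx.1.le, hx.2.le⟩) 2
  · exact (hr.integrableOn_iff hX G).2 iG
  · filter_upwards [hσ.nonneg_Ioo le_rfl, ae_restrict_mem measurableSet_Ioo] with y hy hyI
    set z := y + ε * ζ y with hz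
    have hzI := hr.mem_Ioo hyI
    have e1 : |z - T z| ≤ X := hTb z hzI
    have e2 : |ζ y - ζ z| ≤ B * (|ε| * B) := by
      refine (h.lip y z).trans ?_
      gcongr
      · exact h.Bpos.le
      · rw [hz, show y - (y + ε * ζ y) = -(ε * ζ y) by ring, abs_neg, abs_mul]
        gcongr
        exact h.bd y
    have e3 : |ε * (ζ y - ζ z) * (z - T z)| ≤ |ε| * (B * (|ε| * B)) * X := by
      rw [abs_mul, abs_mul]
      have := h.Bpos
      gcongr
    have e4 : |ε| * (B * (|ε| * B)) * X = ε ^ 2 * B ^ 2 * X := by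
      rw [← sq_abs ε]; ring
    have e5 : ζ y ^ 2 ≤ B ^ 2 := by
      rw [← sq_abs (ζ y)]; exact pow_le_pow_left₀ (abs_nonneg _) (h.bd y) 2
    have e6 : ε ^ 2 * ζ y ^ 2 ≤ ε ^ 2 * B ^ 2 := by gcongr
    have e7 : (y - T z) ^ 2 ≤ (z - T z) ^ 2 - 2 * ε * (ζ z * (z - T z)) + ε ^ 2 * K := by
      have : y - T z = (z - T z) - ε * ζ y := by rw [hz]; ring
      rw [this, hK]
      have := (abs_le.1 e3).1
      nlinarith
    have := mul_le_mul_of_nonneg_right e7 hy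
    simp only [reparam, ← hz, Function.comp, hG] at this ⊢
    linarith

/-- The entropy of the deformed density, to first order in `ε`; only `log (1 + s) ≤ s` is used. -/
lemma entropy_variation {X B ε : ℝ} {ζ ζ' ρ : ℝ → ℝ} (hX : 0 < X) (h : IsTestField X ζ ζ' B)
    (hε : |ε| ≤ 1 / (2 * B)) (hρ : FiniteDens X ρ)
    (hent : IntegrableOn (fun x => ρ x * Real.log (ρ x)) (Ioo 0 X)) :
    ∫ y in Ioo 0 X, reparam ρ (fun x => x + ε * ζ x) (fun x => 1 + ε * ζ' x) y
        * Real.log (reparam ρ (fun x => x + ε * ζ x) (fun x => 1 + ε * ζ' x) y)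
      ≤ (∫ x in Ioo 0 X, ρ x * Real.log (ρ x)) + ε * (∫ x in Ioo 0 X, ζ' x * ρ x)
        + ε ^ 2 * (B ^ 2 * ∫ x in Ioo 0 X, ρ x) := by
  have hr := h.isReparam hε
  have hσ := hr.finiteDens hX hρ
  have i2 : IntegrableOn (fun x => ζ' x * ρ x) (Ioo 0 X) :=
    integrableOn_bdd_mul measurableSet_Ioo hρ.int h.cont.measurable (C := B) fun x _ => h.bd' x
  set G : ℝ → ℝ := fun x => ε * (ζ' x * ρ x) + ε ^ 2 * (B ^ 2 * ρ x) with hG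
  have iG : IntegrableOn G (Ioo 0 X) :=
    (i2.const_mul _).add ((hρ.int.const_mul _).const_mul _)
  have eG : ∫ x in Ioo 0 X, G x = ε * (∫ x in Ioo 0 X, ζ' x * ρ x)
        + ε ^ 2 * (B ^ 2 * ∫ x in Ioo 0 X, ρ x) := by
    rw [hG, integral_add (i2.const_mul _) ((hρ.int.const_mul _).const_mul _),
      integral_const_mul, integral_const_mul, integral_const_mul]
  set H : ℝ → ℝ := fun x => ρ x * Real.log (ρ x) + G x with hH
  rw [add_assoc, ← eG, ← integral_add hent iG, ← hr.integral_eq hX H]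
  have hlogc : Continuous fun y => Real.log (1 + ε * ζ' y) :=
    hr.cont.log fun y => (hr.pos y).ne'
  have ilog : IntegrableOn (fun y => Real.log (1 + ε * ζ' y)
      * reparam ρ (fun x => x + ε * ζ x) (fun x => 1 + ε * ζ' x) y) (Ioo 0 X) := by
    obtain ⟨C, hC⟩ := isCompact_Icc.exists_bound_of_continuousOn (s := Icc 0 X) hlogc.continuousOn
    exact integrableOn_bdd_mul measurableSet_Ioo hσ.int hlogc.measurable
      fun x hx => hC x ⟨hx.1.le, hx.2.le⟩
  apply integral_mono_ae
  · simp only [hr.entropy_eq]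
    exact ((hr.integrableOn_iff hX (fun x => ρ x * Real.log (ρ x))).2 hent).add ilog
  · exact (hr.integrableOn_iff hX H).2 (hent.add iG)
  · filter_upwards [hσ.nonneg_Ioo le_rfl] with y hy
    rw [hr.entropy_eq]
    have e1 : Real.log (1 + ε * ζ' y) ≤ ε * ζ' y := by
      linarith [Real.log_le_sub_one_of_pos (hr.pos y)]
    set z := y + ε * ζ y with hz
    have e2 : |ζ' y - ζ' z| ≤ B * (|ε| * B) := by
      refine (h.lip' y z).trans ?_
      gcongr
      · exact h.Bpos.le
      · rw [hz, show y - (y + ε * ζ y) = -(ε * ζ y) by ring, abs_neg, abs_mul]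
        gcongr
        exact h.bd y
    have e3 : |ε * (ζ' y - ζ' z)| ≤ |ε| * (B * (|ε| * B)) := by
      rw [abs_mul]
      gcongr
    have e4 : |ε| * (B * (|ε| * B)) = ε ^ 2 * B ^ 2 := by
      rw [← sq_abs ε]; ring
    have e5 : Real.log (1 + ε * ζ' y) ≤ ε * ζ' z + ε ^ 2 * B ^ 2 := by
      linarith [(abs_le.1 e3).2]
    have := mul_le_mul_of_nonneg_right e5 hy
    simp only [reparam, ← hz, hG, hH] at this ⊢
    linarith

lemma integral_fEnt {X β : ℝ} {ρ : ℝ → ℝ} (hρ : FiniteDens X ρ) :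
    ∫ x in Ioi (0:ℝ), fEnt β (ρ x) = ∫ x in Ioo 0 X, fEnt β (ρ x) := by
  rw [← integral_Ioc_eq_integral_Ioo]
  apply setIntegral_eq_of_subset_of_ae_sdiff_eq_zero measurableSet_Ioi.nullMeasurableSet
    Ioc_subset_Ioi_self
  filter_upwards [hρ.after] with x hx hx'
  have : X < x := by
    by_contra hc
    exact hx'.2 ⟨hx'.1, not_lt.1 hc⟩
  rw [hx this, fEnt]
  simp

lemma integral_fEnt_of_integrable {X β : ℝ} {ρ : ℝ → ℝ} (hρ : FiniteDens X ρ) (hX : 0 < X)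
    (hent : IntegrableOn (fun x => ρ x * Real.log (ρ x)) (Ioo 0 X)) :
    ∫ x in Ioi (0:ℝ), fEnt β (ρ x)
      = (∫ x in Ioo 0 X, ρ x * Real.log (ρ x)) - β * (∫ x in Ioo 0 X, ρ x) + β * X := by
  rw [integral_fEnt hρ]
  have : ∀ x, fEnt β (ρ x) = (ρ x * Real.log (ρ x) - β * ρ x) + β := fun x => by
    unfold fEnt; ring
  simp only [this]
  have i1 : IntegrableOn (fun x => ρ x * Real.log (ρ x) - β * ρ x) (Ioo 0 X) :=
    hent.sub (hρ.int.const_mul β)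
  rw [integral_add i1 (by simp), integral_sub hent (hρ.int.const_mul β), integral_const_mul]
  simp [hX.le, mul_comm]

/-- Without entropy integrability the Bochner integral of the energy density takes the value `0`. -/
lemma integral_fEnt_of_not_integrable {X β : ℝ} {ρ : ℝ → ℝ} (hρ : FiniteDens X ρ)
    (hent : ¬ IntegrableOn (fun x => ρ x * Real.log (ρ x)) (Ioo 0 X)) :
    ∫ x in Ioi (0:ℝ), fEnt β (ρ x) = 0 := by
  rw [integral_fEnt hρ]
  apply integral_undef
  intro hc
  apply hent
  have : (fun x => ρ x * Real.log (ρ x)) = fun x => (fEnt β (ρ x) + β * ρ x) - β := by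
    ext x; unfold fEnt; ring
  rw [this]
  exact (hc.add (hρ.int.const_mul β)).sub (by simp)

lemma IsReparam.entropy_integrable_iff {X : ℝ} {Ψ Ψ' ρ : ℝ → ℝ} (h : IsReparam X Ψ Ψ')
    (hX : 0 < X) (hρ : FiniteDens X ρ) :
    IntegrableOn (fun x => reparam ρ Ψ Ψ' x * Real.log (reparam ρ Ψ Ψ' x)) (Ioo 0 X)
      ↔ IntegrableOn (fun x => ρ x * Real.log (ρ x)) (Ioo 0 X) := by
  have hσ := h.finiteDens hX hρ
  have hlogc : Continuous fun y => Real.log (Ψ' y) := h.cont.log fun y => (h.pos y).ne'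
  have ilog : IntegrableOn (fun y => Real.log (Ψ' y) * reparam ρ Ψ Ψ' y) (Ioo 0 X) := by
    obtain ⟨C, hC⟩ := isCompact_Icc.exists_bound_of_continuousOn (s := Icc 0 X) hlogc.continuousOn
    exact integrableOn_bdd_mul measurableSet_Ioo hσ.int hlogc.measurable
      fun x hx => hC x ⟨hx.1.le, hx.2.le⟩
  rw [← h.integrableOn_iff hX (fun x => ρ x * Real.log (ρ x))]
  simp only [h.entropy_eq]
  exact integrable_add_iff_integrable_left ilog

/-! ### The Euler–Lagrange equation for inner deformations -/

/-- A smooth function with support inside `(0,X)` is a test field, with its derivative. -/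
lemma exists_isTestField {X : ℝ} {ξ : ℝ → ℝ} (hξ : ContDiff ℝ (⊤ : ℕ∞) ξ)
    (hs : tsupport ξ ⊆ Ioo 0 X) : ∃ B, IsTestField X ξ (deriv ξ) B := by
  have hc : HasCompactSupport ξ :=
    isCompact_Icc.of_isClosed_subset (isClosed_tsupport ξ) (hs.trans Ioo_subset_Icc_self)
  have hd1 : ContDiff ℝ (⊤ : ℕ∞) (deriv ξ) := (contDiff_infty_iff_deriv.1 hξ).2
  have hd2 : ContDiff ℝ (⊤ : ℕ∞) (deriv (deriv ξ)) := (contDiff_infty_iff_deriv.1 hd1).2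
  have hD1 : Differentiable ℝ ξ := (contDiff_infty_iff_deriv.1 hξ).1
  have hD2 : Differentiable ℝ (deriv ξ) := (contDiff_infty_iff_deriv.1 hd1).1
  obtain ⟨C0, h0⟩ := hc.exists_bound_of_continuous hξ.continuous
  obtain ⟨C1, h1⟩ := hc.deriv.exists_bound_of_continuous hd1.continuous
  obtain ⟨C2, h2⟩ := hc.deriv.deriv.exists_bound_of_continuous hd2.continuous
  set B := max (max C0 C1) (max C2 1) with hB
  have b0 : C0 ≤ B := (le_max_left _ _).trans (le_max_left _ _)
  have b1 : C1 ≤ B := (le_max_right _ _).trans (le_max_left _ _)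
  have b2 : C2 ≤ B := (le_max_left _ _).trans (le_max_right _ _)
  have b3 : 1 ≤ B := (le_max_right _ _).trans (le_max_right _ _)
  refine ⟨B, by linarith, fun x => (hD1 x).hasDerivAt, hd1.continuous, fun x hx => ⟨?_, ?_⟩,
    fun x => (h0 x).trans b0, fun x => (h1 x).trans b1, fun x y => ?_, fun x y => ?_⟩
  · exact image_eq_zero_of_notMem_tsupport fun h => hx (hs h)
  · by_contra hne
    exact hx (hs (support_deriv_subset (Function.mem_support.2 hne)))
  · exact convex_univ.norm_image_sub_le_of_norm_deriv_le (fun z _ => hD1 z)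
      (fun z _ => (h1 z).trans b1) (mem_univ y) (mem_univ x)
  · exact convex_univ.norm_image_sub_le_of_norm_deriv_le (fun z _ => hD2 z)
      (fun z _ => (h2 z).trans b2) (mem_univ y) (mem_univ x)

/-- Comparison of a minimizer with the deformed density `reparam ρ Ψ Ψ'`. Mass and `X` do not
change, so only transport cost and entropy enter. -/
lemma IsReparam.compare {lam α β θ τ Kτ mτ X0 X : ℝ} {ρ0 ρ Ψ Ψ' : ℝ → ℝ}
    (hmin : IsJKOMin lam α β θ τ Kτ mτ X0 ρ0 X ρ) (hX : 0 < X) (hρ : FiniteDens X ρ)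
    (hr : IsReparam X Ψ Ψ') :
    W2sq ρ ρ0 / (2 * τ) + ∫ x in Ioi (0:ℝ), fEnt β (ρ x)
      ≤ W2sq (reparam ρ Ψ Ψ') ρ0 / (2 * τ)
        + ∫ x in Ioi (0:ℝ), fEnt β (reparam ρ Ψ Ψ' x) := by
  have hσ := hr.finiteDens hX hρ
  have h := hmin.2 X (reparam ρ Ψ Ψ')
    ⟨hr.memAdm hX hmin.1.1 hρ.after, xA_le hX hσ.after⟩
  unfold Jfun dsq Efun at h
  rw [hr.Mdiff_eq hX hρ ρ0, add_div, add_div] at h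
  linarith

/-- First variation of the functional along a test field. If `ρ ln ρ` fails to be integrable on
`(0,X)`, then the Bochner integral of the energy density is `0` for `ρ` and for all its
deformations, and only the transport term survives. -/
lemma first_variation {lam α β θ τ Kτ mτ X0 X ℓ B : ℝ} {ρ0 ρ T ζ ζ' : ℝ → ℝ}
    (hmin : IsJKOMin lam α β θ τ Kτ mτ X0 ρ0 X ρ) (hτ : 0 < τ) (hX : 0 < X)
    (hρ : FiniteDens X ρ) (h0 : FiniteDens X ρ0) (hX0 : xA ρ0 ≤ X)
    (h0e : ∀ᵐ y : ℝ, y ∈ Ioi (xA ρ0) → ρ0 y = 1) (hp : TPlan ρ0 ρ X T ℓ (Mdiff ρ ρ0))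
    (hW : W2sq ρ ρ0
      = (∫ x in Ioo 0 X, (x - T x) ^ 2 * ρ x) + ∫ y in Ioo 0 ℓ, y ^ 2 * ρ0 y)
    (hζ : IsTestField X ζ ζ' B) :
    (IntegrableOn (fun x => ρ x * Real.log (ρ x)) (Ioo 0 X) →
      ∫ x in Ioo 0 X, ζ x * (x - T x) * ρ x = τ * ∫ x in Ioo 0 X, ζ' x * ρ x) ∧
    (¬ IntegrableOn (fun x => ρ x * Real.log (ρ x)) (Ioo 0 X) →
      ∫ x in Ioo 0 X, ζ x * (x - T x) * ρ x = 0) := by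
  have hB := hζ.Bpos
  have hε0 : 0 < 1 / (2 * B) := by positivity
  set A := ∫ x in Ioo 0 X, ζ x * (x - T x) * ρ x with hA
  set D := ∫ x in Ioo 0 X, ζ' x * ρ x with hD
  set K₁ := (2 * B ^ 2 * X + B ^ 2) * ∫ x in Ioo 0 X, ρ x with hK₁
  set K₂ := B ^ 2 * ∫ x in Ioo 0 X, ρ x with hK₂
  have key : ∀ ε : ℝ, |ε| ≤ 1 / (2 * B) →
      ∫ x in Ioi (0:ℝ), fEnt β (ρ x) ≤ -(ε * A / τ) + K₁ / (2 * τ) * ε ^ 2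
        + ∫ x in Ioi (0:ℝ), fEnt β (reparam ρ (fun x => x + ε * ζ x) (fun x => 1 + ε * ζ' x) x) := by
    intro ε hε
    have hr := hζ.isReparam hε
    have hσ := hr.finiteDens hX hρ
    have hpσ := hr.tplan hX hp
    rw [← hr.Mdiff_eq hX hρ ρ0] at hpσ
    have c1 := W2sq_le h0 hσ hX0 (xA_le hX hσ.after) h0e (ae_eq_one_of_xA ⟨X, hX, hσ.after⟩) hpσ
    have c2 := cost_variation hX hζ hε hρ hp
    have c3 := hr.compare hmin hX hρ
    have c4 : W2sq (reparam ρ (fun x => x + ε * ζ x) (fun x => 1 + ε * ζ' x)) ρ0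
        ≤ W2sq ρ ρ0 - 2 * ε * A + ε ^ 2 * K₁ := by rw [hW]; linarith
    have c5 := div_le_div_of_nonneg_right c4 (show 0 ≤ 2 * τ by positivity)
    have c6 : (W2sq ρ ρ0 - 2 * ε * A + ε ^ 2 * K₁) / (2 * τ)
        = W2sq ρ ρ0 / (2 * τ) - ε * A / τ + K₁ / (2 * τ) * ε ^ 2 := by field_simp
    linarith
  constructor
  · intro hent
    have hL := eq_zero_of_quadratic (L := D - A / τ) (C := K₁ / (2 * τ) + K₂) hε0 fun ε hε => by
      have hr := hζ.isReparam hε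
      have k1 := key ε hε
      have k2 := entropy_variation hX hζ hε hρ hent
      have hmass : ∫ x in Ioo 0 X, reparam ρ (fun x => x + ε * ζ x) (fun x => 1 + ε * ζ' x) x
          = ∫ x in Ioo 0 X, ρ x := hr.integral_eq hX ρ
      rw [integral_fEnt_of_integrable hρ hX hent,
        integral_fEnt_of_integrable (hr.finiteDens hX hρ) hX
          ((hr.entropy_integrable_iff hX hρ).2 hent), hmass] at k1
      have : ε * (D - A / τ) = ε * D - ε * A / τ := by ring
      rw [this]
      linarith
    have : D = A / τ := by linarith
    rw [this]
    field_simp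
  · intro hent
    have hL := eq_zero_of_quadratic (L := - (A / τ)) (C := K₁ / (2 * τ)) hε0 fun ε hε => by
      have hr := hζ.isReparam hε
      have k1 := key ε hε
      rw [integral_fEnt_of_not_integrable hρ hent,
        integral_fEnt_of_not_integrable (hr.finiteDens hX hρ)
          (fun h => hent ((hr.entropy_integrable_iff hX hρ).1 h))] at k1
      have : ε * (-(A / τ)) = -(ε * A / τ) := by ring
      rw [this]
      linarith
    have : A / τ = 0 := by linarith
    rcases div_eq_zero_iff.1 this with h | h
    · exact h
    · exact absurd h hτ.ne'

/-! ### Test functions and entropy integrability -/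

/-- The fundamental lemma of the calculus of variations on an open subset of `(0,X)`. -/
lemma ae_zero_of_test {X : ℝ} {U : Set ℝ} {h : ℝ → ℝ} (hU : IsOpen U) (hUX : U ⊆ Ioo 0 X)
    (hh : LocallyIntegrableOn h U)
    (H : ∀ ξ : ℝ → ℝ, ContDiff ℝ (⊤ : ℕ∞) ξ → tsupport ξ ⊆ U → ∫ x in Ioo 0 X, ξ x * h x = 0) :
    ∀ᵐ x : ℝ, x ∈ U → h x = 0 := by
  apply hU.ae_eq_zero_of_integral_contDiff_smul_eq_zero hh
  intro ξ hξ _ hs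
  rw [← H ξ hξ hs]
  symm
  apply setIntegral_eq_integral_of_forall_compl_eq_zero
  intro x hx
  rw [image_eq_zero_of_notMem_tsupport fun h' => hx (hUX (hs h')), zero_mul]

lemma locallyIntegrableOn_of_mul {X : ℝ} {g φ : ℝ → ℝ} (hφ : Continuous φ)
    (hi : IntegrableOn (fun x => g x * φ x) (Ioo 0 X)) :
    LocallyIntegrableOn g (Ioo 0 X ∩ {x | φ x ≠ 0}) := by
  have hU : IsOpen (Ioo 0 X ∩ {x | φ x ≠ 0}) :=
    isOpen_Ioo.inter (isOpen_ne_fun hφ continuous_const)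
  rw [locallyIntegrableOn_iff hU.isLocallyClosed]
  intro K hK hKc
  have h1 : IntegrableOn (fun x => g x * φ x) K := hi.mono_set (hK.trans inter_subset_left)
  have h2 : ContinuousOn (fun x => (φ x)⁻¹) K := hφ.continuousOn.inv₀ fun x hx => (hK hx).2
  refine (h1.mul_continuousOn h2 hKc).congr_fun (fun x hx => ?_) hKc.measurableSet
  have := (hK hx).2
  simp only [mem_ofPred_eq] at this
  field_simp

/-- Two functions with the same pairing against test functions supported in `U` agree a.e. on `U`,
provided both are locally integrable there. -/
lemma ae_eq_of_test {X : ℝ} {U : Set ℝ} {g h : ℝ → ℝ} (hU : IsOpen U) (hUX : U ⊆ Ioo 0 X)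
    (hg : LocallyIntegrableOn g U) (hh : IntegrableOn h (Ioo 0 X))
    (hgh : ∀ ξ : ℝ → ℝ, ContDiff ℝ (⊤ : ℕ∞) ξ → tsupport ξ ⊆ Ioo 0 X →
      ∫ x in Ioo 0 X, g x * ξ x = ∫ x in Ioo 0 X, h x * ξ x) :
    ∀ᵐ x : ℝ, x ∈ U → g x = h x := by
  have hl : LocallyIntegrableOn h U := (hh.mono_set hUX).locallyIntegrableOn
  have := ae_zero_of_test (h := fun x => g x - h x) hU hUX (hg.sub hl) (X := X) (by
    intro ξ hξ hs
    have hc : IsCompact (tsupport ξ) :=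
      isCompact_Icc.of_isClosed_subset (isClosed_tsupport ξ)
        ((hs.trans hUX).trans Ioo_subset_Icc_self)
    have aux : ∀ f : ℝ → ℝ, LocallyIntegrableOn f U →
        IntegrableOn (fun x => f x * ξ x) (Ioo 0 X) := by
      intro f hf
      have h1 : IntegrableOn f (tsupport ξ) :=
        (locallyIntegrableOn_iff hU.isLocallyClosed).1 hf _ hs hc
      refine IntegrableOn.of_forall_sdiff_eq_zero (h1.mul_continuousOn hξ.continuous.continuousOn hc)
        measurableSet_Ioo fun x hx => ?_
      rw [image_eq_zero_of_notMem_tsupport hx.2, mul_zero]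
    have e : ∀ x, ξ x * (g x - h x) = g x * ξ x - h x * ξ x := fun x => by ring
    simp only [e]
    rw [integral_sub (aux g hg) (aux h hl), hgh ξ hξ (hs.trans hUX), sub_self])
  filter_upwards [this] with x hx hxU
  exact sub_eq_zero.1 (hx hxU)

/-- The defining identity of the weak derivative determines `∫ g φ` for every continuous `φ`, with
no integrability assumed on `g`. If `g φ` is not integrable, then `g` is not locally integrable at
some `x₀`, so `∫ g ξ` has the value `0` whenever `ξ x₀ ≠ 0`; adding a bump at `x₀` shows that
`∫ h ξ = 0` for all test functions, and both sides vanish. -/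
lemma weak_deriv_pairing {X : ℝ} {g h φ : ℝ → ℝ} (hh : IntegrableOn h (Ioo 0 X))
    (hgh : ∀ ξ : ℝ → ℝ, ContDiff ℝ (⊤ : ℕ∞) ξ → tsupport ξ ⊆ Ioo 0 X →
      ∫ x in Ioo 0 X, g x * ξ x = ∫ x in Ioo 0 X, h x * ξ x)
    (hφ : Continuous φ) :
    ∫ x in Ioo 0 X, g x * φ x = ∫ x in Ioo 0 X, h x * φ x := by
  have hbdd : ∀ f : ℝ → ℝ, Continuous f → IntegrableOn (fun x => h x * f x) (Ioo 0 X) := by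
    intro f hf
    obtain ⟨C, hC⟩ := isCompact_Icc.exists_bound_of_continuousOn (s := Icc 0 X) hf.continuousOn
    have := integrableOn_bdd_mul measurableSet_Ioo hh hf.measurable
      fun x hx => hC x ⟨hx.1.le, hx.2.le⟩
    simpa only [mul_comm] using this
  by_cases hi : IntegrableOn (fun x => g x * φ x) (Ioo 0 X)
  · have := ae_eq_of_test (isOpen_Ioo.inter (isOpen_ne_fun hφ continuous_const)) inter_subset_left
      (locallyIntegrableOn_of_mul hφ hi) hh hgh
    apply integral_congr_ae
    filter_upwards [ae_restrict_mem measurableSet_Ioo, ae_restrict_of_ae this] with x hx hx'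
    by_cases h0 : φ x = 0
    · rw [h0, mul_zero, mul_zero]
    · rw [hx' ⟨hx, h0⟩]
  · rw [integral_undef hi]
    have hnl : ¬ LocallyIntegrableOn g (Ioo 0 X) := by
      intro hl
      have := ae_eq_of_test isOpen_Ioo Subset.rfl hl hh hgh
      refine hi ((hbdd φ hφ).congr_fun_ae ?_)
      filter_upwards [ae_restrict_mem measurableSet_Ioo, ae_restrict_of_ae this] with x hx hx'
      rw [hx' hx]
    unfold LocallyIntegrableOn at hnl
    push Not at hnl
    obtain ⟨x₀, hx₀, hn⟩ := hnl
    have hξ0 : ∀ ξ : ℝ → ℝ, ContDiff ℝ (⊤ : ℕ∞) ξ → tsupport ξ ⊆ Ioo 0 X → ξ x₀ ≠ 0 →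
        ∫ x in Ioo 0 X, h x * ξ x = 0 := by
      intro ξ hξ hs h0
      rw [← hgh ξ hξ hs]
      apply integral_undef
      intro hc
      have hU : IsOpen (Ioo 0 X ∩ {x | ξ x ≠ 0}) :=
        isOpen_Ioo.inter (isOpen_ne_fun hξ.continuous continuous_const)
      have := locallyIntegrableOn_of_mul hξ.continuous hc x₀ ⟨hx₀, h0⟩
      rw [hU.nhdsWithin_eq ⟨hx₀, h0⟩] at this
      rw [isOpen_Ioo.nhdsWithin_eq hx₀] at hn
      exact hn this
    obtain ⟨ξ₁, hs₁, -, hξ₁, -, h1⟩ :=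
      exists_contDiff_tsupport_subset (n := (⊤ : ℕ∞)) (isOpen_Ioo.mem_nhds hx₀)
    have hall : ∀ᵐ x : ℝ, x ∈ Ioo 0 X → h x = 0 := by
      apply ae_zero_of_test isOpen_Ioo Subset.rfl hh.locallyIntegrableOn
      intro ξ hξ hs
      simp only [mul_comm (ξ _)]
      by_cases h0 : ξ x₀ = 0
      · have k1 := hξ0 ξ₁ hξ₁ hs₁ (by rw [h1]; exact one_ne_zero)
        have k2 := hξ0 (fun x => ξ x + ξ₁ x) (hξ.add hξ₁)
          ((tsupport_add ξ ξ₁).trans (union_subset hs hs₁)) (by simp [h0, h1])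
        simp only [mul_add] at k2
        rw [integral_add (hbdd ξ hξ.continuous) (hbdd ξ₁ hξ₁.continuous), k1, add_zero] at k2
        exact k2
      · exact hξ0 ξ hξ hs h0
    symm
    apply integral_eq_zero_of_ae
    filter_upwards [ae_restrict_mem measurableSet_Ioo, ae_restrict_of_ae hall] with x hx hx'
    rw [hx' hx, zero_mul, Pi.zero_apply]

/-- If the transport term in the first variation vanishes identically, then `T = id` on the support
of `ρ`, so `ρ ≤ ρ⁰ ≤ 1` and the entropy is integrable. -/
lemma entropy_integrable_of_stationary {X ℓ m : ℝ} {ρ0 ρ T : ℝ → ℝ} (hρ : FiniteDens X ρ)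
    (h0le : ∀ x, 0 < x → ρ0 x ≤ 1) (hp : TPlan ρ0 ρ X T ℓ m)
    (H : ∀ ξ : ℝ → ℝ, ContDiff ℝ (⊤ : ℕ∞) ξ → tsupport ξ ⊆ Ioo 0 X →
      ∫ x in Ioo 0 X, ξ x * (x - T x) * ρ x = 0) :
    IntegrableOn (fun x => ρ x * Real.log (ρ x)) (Ioo 0 X) := by
  have hi : IntegrableOn (fun x => (x - T x) * ρ x) (Ioo 0 X) :=
    integrableOn_bdd_mul measurableSet_Ioo hρ.int (measurable_id.sub hp.meas) (C := X)
      fun x hx => hp.dist_le ⟨hx.1.le, hx.2.le⟩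
  have hz : ∀ᵐ x : ℝ, x ∈ Ioo 0 X → (x - T x) * ρ x = 0 :=
    ae_zero_of_test isOpen_Ioo Subset.rfl hi.locallyIntegrableOn fun ξ hξ hs => by
      simpa only [mul_assoc] using H ξ hξ hs
  have hm : AEMeasurable ρ (volume.restrict (Ioo 0 X)) := hρ.int.1.aemeasurable
  have hT : T =ᵐ[densOn ρ (Ioo 0 X)] id := by
    rw [densOn_eq ρ measurableSet_Ioo]
    refine (ae_withDensity_iff' hm.ennreal_ofReal).2 ?_
    filter_upwards [ae_restrict_mem measurableSet_Ioo, ae_restrict_of_ae hz] with x hx hx' hne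
    have h1 : ρ x ≠ 0 := fun h => hne (by rw [h, ENNReal.ofReal_zero])
    have := (mul_eq_zero.1 (hx' hx)).resolve_right h1
    simp only [id]; linarith
  have hpush := hp.push
  rw [Measure.map_congr hT, Measure.map_id] at hpush
  have hle : (fun x => ENNReal.ofReal (ρ x)) ≤ᵐ[volume.restrict (Ioo 0 X)] fun _ => 1 := by
    apply ae_le_of_forall_setLIntegral_le_of_sigmaFinite₀ hm.ennreal_ofReal
    intro s hs _
    rw [Measure.restrict_restrict hs]
    have e1 : densOn ρ (Ioo 0 X) (s ∩ Ioo 0 X) = ∫⁻ x in s ∩ Ioo 0 X, ENNReal.ofReal (ρ x) := by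
      rw [densOn_apply ρ measurableSet_Ioo (hs.inter measurableSet_Ioo), inter_assoc, inter_self]
    have hsI := hs.inter (measurableSet_Ioo (a := (0:ℝ)) (b := X))
    rw [← e1, hpush, Measure.add_apply, Measure.smul_apply, Measure.dirac_apply' _ hsI,
      indicator_of_notMem (by simp), smul_zero, add_zero, densOn_apply ρ0 measurableSet_Ioo hsI]
    refine (lintegral_mono_set inter_subset_left).trans ?_
    apply setLIntegral_mono measurable_const
    intro x hx
    exact ENNReal.ofReal_le_one.2 (h0le x hx.2.1)
  refine Integrable.of_bound (C := 1) ?_ ?_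
  · exact (hm.mul (Real.measurable_log.comp_aemeasurable hm)).aestronglyMeasurable
  · filter_upwards [hle, hρ.nonneg_Ioo le_rfl] with x hx hx0
    rcases hx0.eq_or_lt with h | h
    · simp [← h]
    · rw [Real.norm_eq_abs, mul_comm]
      exact (Real.abs_log_mul_self_lt _ h (ENNReal.ofReal_le_one.1 hx)).le

/-! ### Initial datum and transport structure -/

section InitialDatum

variable {β θ X0 ρmin ρmax X : ℝ} {ρ0 ρ0' : ℝ → ℝ}

lemma H2.le_one (h : H2 β θ X0 ρmin ρmax ρ0 ρ0') {x : ℝ} (hx : 0 < x) : ρ0 x ≤ 1 := by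
  obtain ⟨-, -, -, -, h1, -, -, h2, h3⟩ := h
  rcases le_or_gt x X0 with hc | hc
  · exact (h2 x ⟨hx, hc⟩).2.trans h3
  · exact (h1 x hc).le

lemma H2.finiteDens (h : H2 β θ X0 ρmin ρmax ρ0 ρ0') (hX : X0 ≤ X) : FiniteDens X ρ0 := by
  obtain ⟨h0, hpos, hd, -, h1, -⟩ := h
  refine ⟨Eventually.of_forall fun x => (hpos x).le, ?_,
    Eventually.of_forall fun x hx => h1 x (hX.trans_lt hx)⟩
  have i1 : IntegrableOn ρ0 (Icc 0 X0) :=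
    ContinuousOn.integrableOn_Icc fun x hx => (hd x hx).continuousWithinAt
  have i2 : IntegrableOn ρ0 (Ioo X0 X) :=
    (integrableOn_const (C := (1:ℝ)) (by simp)).congr_fun (fun x hx => (h1 x hx.1).symm)
      measurableSet_Ioo
  refine (i1.union i2).mono_set fun x hx => ?_
  rcases le_or_gt x X0 with hc | hc
  · exact Or.inl ⟨hx.1.le, hc⟩
  · exact Or.inr ⟨hc, hx.2⟩

/-- Since `ρ⁰(0) ≤ ρ₊ < 1`, the datum has a strict mass deficit. -/
lemma H2.Mfun_ne_zero (h : H2 β θ X0 ρmin ρmax ρ0 ρ0') (hβθ : β + θ < 1) : Mfun ρ0 ≠ 0 := by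
  have hf := h.finiteDens le_rfl
  have hle := fun x (hx : 0 < x) => h.le_one hx
  obtain ⟨h0, hpos, hd, -, -, hρ, -⟩ := h
  rw [IsReparam.Mfun_eq h0 hf]
  intro hc
  have hlt : ρ0 0 < 1 := hρ.2.trans_lt (by
    unfold rhoPlus; rw [Real.exp_lt_one_iff]; linarith)
  have hI : ∫ x in Ioo 0 X0, (1 - ρ0 x) = 0 := by
    rw [integral_sub (by simp) hf.int]
    simp [h0.le]
    linarith
  have hae := (setIntegral_eq_zero_iff_of_nonneg_ae (by
    filter_upwards [ae_restrict_mem measurableSet_Ioo] with x hx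
    simpa using hle x hx.1) ((integrableOn_const (C := (1:ℝ)) (by simp)).sub hf.int)).1 hI
  have hcont : ContinuousWithinAt ρ0 (Icc 0 X0) 0 := (hd 0 ⟨le_rfl, h0.le⟩).continuousWithinAt
  have hev : ∀ᶠ x in 𝓝[>] (0:ℝ), ρ0 x < 1 := by
    have := hcont.eventually (Iio_mem_nhds hlt)
    rw [nhdsWithin_Icc_eq_nhdsGE h0] at this
    exact this.filter_mono (nhdsWithin_mono _ Ioi_subset_Ici_self)
  obtain ⟨u, hu, hsub⟩ := (mem_nhdsGT_iff_exists_Ioo_subset).1 hev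
  have hm : 0 < min u X0 := lt_min hu h0
  have hz : volume (Ioo 0 (min u X0)) = 0 := by
    refine measure_mono_null (t := {x | ¬ (x ∈ Ioo 0 X0 → (fun x => 1 - ρ0 x) x = 0)}) ?_
      ((ae_restrict_iff' measurableSet_Ioo).1 hae)
    intro x hx hxx
    have h1 := hxx ⟨hx.1, hx.2.trans_le (min_le_right _ _)⟩
    have h2 := hsub ⟨hx.1, hx.2.trans_le (min_le_left _ _)⟩
    simp only [mem_ofPred_eq] at h2
    simp only at h1
    linarith
  simp at hz
  rcases hz with h | h
  · linarith [mem_Ioi.1 hu]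
  · linarith

end InitialDatum

lemma integral_zero_to_eq {a : ℝ} (ha : 0 ≤ a) (f : ℝ → ℝ) :
    ∫ x in (0:ℝ)..a, f x = ∫ x in Ioo 0 a, f x := by
  rw [intervalIntegral.integral_of_le ha, integral_Ioc_eq_integral_Ioo]

/-- Both transport structures give a plan in the sense of `TPlan`, and they force `ρ` to have finite
mass on `(0,X)`; membership in `𝔸` alone does not control `ρ` near `0`. For `M ≥ 0`, infinite mass
on `(0,ℓ₊)` would make both `𝐌(ρ)` and `∫₀^{ℓ₊} ρ` equal to `0`, hence `𝐌(ρ⁰) = 0`. -/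
lemma TransportStruct.plan {ρ0 ρ T : ℝ → ℝ} {X ℓ : ℝ} (ht : TransportStruct ρ0 ρ X T ℓ)
    (hX : 0 < X) (hρ : MemAdmSet X ρ) (h0 : FiniteDens X ρ0) (hM0 : Mfun ρ0 ≠ 0) :
    FiniteDens X ρ ∧ TPlan ρ0 ρ X T ℓ (Mdiff ρ ρ0) ∧
      W2sq ρ ρ0 = (∫ x in Ioo 0 X, (x - T x) ^ 2 * ρ x) + ∫ y in Ioo 0 ℓ, y ^ 2 * ρ0 y := by
  obtain ⟨⟨hn, hl, -, hone⟩, hxA⟩ := hρ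
  have hnn : ∀ᵐ x ∂volume.restrict (Ioi (0:ℝ)), 0 ≤ ρ x :=
    (ae_restrict_iff' measurableSet_Ioi).2 hn
  have hnI : ∀ a b : ℝ, 0 ≤ a → ∀ᵐ x ∂volume.restrict (Ioo a b), 0 ≤ ρ x := fun a b ha =>
    ae_restrict_of_ae_restrict_of_subset (fun _ hx => ha.trans_lt hx.1) hnn
  have hmI : ∀ a b : ℝ, 0 ≤ a → AEStronglyMeasurable ρ (volume.restrict (Ioo a b)) :=
    fun a b ha => hl.aestronglyMeasurable.mono_measure
      (Measure.restrict_mono (fun _ hx => ha.trans_lt hx.1) le_rfl)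
  have hafter : ∀ᵐ y : ℝ, y ∈ Ioi X → ρ y = 1 := by
    filter_upwards [ae_eq_one_of_xA hone] with y hy hyX
    exact hy (hxA.trans_lt hyX)
  rcases ht with ⟨hM, rfl, ℓp, hp0, hTm, hmono, hmaps, hT0, hTX, hpush, hMp, hW⟩ |
    ⟨hM, hl0, hTm, hmono, hmaps, -, -, hpush, hMm, hW⟩
  · have hlX : ℓp < X := by
      by_contra hc
      have := hT0 X ⟨hX.le, not_lt.1 hc⟩
      rw [hTX] at this
      exact hX.ne' this
    have i2 : IntegrableOn ρ (Ioo ℓp X) := by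
      apply integrableOn_of_densOn measurableSet_Ioo (hmI _ _ hp0) (hnI _ _ hp0)
      have hmass := congrArg (fun μ : Measure ℝ => μ univ) hpush
      simp only [Measure.map_apply hTm MeasurableSet.univ, preimage_univ] at hmass
      have := densOn_finite measurableSet_Ioo h0.int
      exact hmass.trans_lt (measure_lt_top (densOn ρ0 (Ioo 0 X)) univ)
    have i1 : IntegrableOn ρ (Ioo 0 ℓp) := by
      by_contra hc
      have e1 : Mfun ρ = 0 := by
        rw [Mfun, integral_undef, neg_zero]
        intro hi
        apply hc
        have h2 : IntegrableOn (fun x => 1 - ρ x) (Ioo 0 ℓp) :=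
          IntegrableOn.mono_set hi fun x hx => hx.1
        have := (integrableOn_const (C := (1:ℝ)) (s := Ioo 0 ℓp) (by simp)).sub h2
        refine this.congr (Eventually.of_forall fun x => ?_)
        simp
      have e2 : ∫ x in (0:ℝ)..ℓp, ρ x = 0 := by
        rw [integral_zero_to_eq hp0, integral_undef hc]
      rw [e2, Mdiff, e1, zero_sub, neg_eq_zero] at hMp
      exact hM0 hMp
    have hint : IntegrableOn ρ (Ioo 0 X) := by
      have : IntegrableOn ρ (Ioc 0 ℓp ∪ Ioo ℓp X) :=
        ((integrableOn_Ioc_iff_integrableOn_Ioo).2 i1).union i2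
      rwa [Ioc_union_Ioo_eq_Ioo hp0 hlX] at this
    refine ⟨⟨hnn, hint, hafter⟩, ⟨le_rfl, hX.le, hTm, hmono, hmaps, ?_, ?_⟩, ?_⟩
    · rw [densOn_split ρ hp0 hlX.le, Measure.map_add _ _ hTm, add_comm]
      have e1 : T =ᵐ[densOn ρ (Ioo 0 ℓp)] fun _ => 0 := by
        have : ∀ᵐ x ∂volume.restrict (Ioo 0 ℓp), T x = 0 := by
          filter_upwards [ae_restrict_mem measurableSet_Ioo] with x hx
          exact hT0 x ⟨hx.1.le, hx.2.le⟩
        exact (densOn_absCont ρ measurableSet_Ioo).ae_le this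
      rw [Measure.map_congr e1, Measure.map_const,
        densOn_univ_eq_integral measurableSet_Ioo i1 (hnI _ _ le_rfl),
        ← integral_zero_to_eq hp0, ← hMp]
      congr 1
    · rw [ENNReal.ofReal_of_nonpos (by linarith), densOn_univ _ measurableSet_Ioo]
      simp
    · rw [hW, integral_zero_to_eq hX.le]
      simp
  · have hlX : ℓ ≤ X := by
      have := hmaps 0 ⟨le_rfl, hX.le⟩
      exact this.1.trans this.2
    have hint : IntegrableOn ρ (Ioo 0 X) := by
      apply integrableOn_of_densOn measurableSet_Ioo (hmI _ _ le_rfl) (hnI _ _ le_rfl)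
      have hmass := congrArg (fun μ : Measure ℝ => μ univ) hpush
      simp only [Measure.map_apply hTm MeasurableSet.univ, preimage_univ] at hmass
      have := densOn_finite measurableSet_Ioo
        (h0.int.mono_set (Ioo_subset_Ioo_left hl0.le : Ioo ℓ X ⊆ _))
      exact hmass.trans_lt (measure_lt_top (densOn ρ0 (Ioo ℓ X)) univ)
    refine ⟨⟨hnn, hint, hafter⟩, ⟨hl0.le, hlX, hTm, hmono, hmaps, ?_, ?_⟩, ?_⟩
    · rw [ENNReal.ofReal_of_nonpos hM.le, zero_smul, add_zero]
      exact hpush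
    · rw [densOn_univ_eq_integral measurableSet_Ioo
        (h0.int.mono_set (Ioo_subset_Ioo_right hlX)) (h0.nonneg_Ioo le_rfl), hMm,
        integral_zero_to_eq hl0.le]
    · rw [hW, integral_zero_to_eq hX.le, integral_zero_to_eq hl0.le]

/-! ### Taylor estimates and the remainder -/

lemma le_iSup_of_hasCompactSupport {f : ℝ → ℝ} (hf : Continuous f) (hc : HasCompactSupport f)
    {x : ℝ} (hx : 0 ≤ x) : |f x| ≤ ⨆ y ∈ Ici (0:ℝ), |f y| := by
  obtain ⟨C, hC⟩ := hc.exists_bound_of_continuous hf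
  have hC0 : 0 ≤ C := (norm_nonneg _).trans (hC 0)
  have hb : BddAbove (range fun y : ℝ => ⨆ (_ : y ∈ Ici (0:ℝ)), |f y|) := by
    refine ⟨C, ?_⟩
    rintro _ ⟨y, rfl⟩
    exact Real.iSup_le (fun _ => hC y) hC0
  refine le_trans ?_ (le_ciSup hb x)
  rw [ciSup_pos (show x ∈ Ici (0:ℝ) from hx)]

lemma abs_sub_le_of_deriv_bound {ψ : ℝ → ℝ} {L : ℝ} (hψ : Differentiable ℝ ψ)
    (hL : ∀ x, 0 ≤ x → |deriv ψ x| ≤ L) {x y : ℝ} (hx : 0 ≤ x) (hy : 0 ≤ y) :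
    |ψ y - ψ x| ≤ L * |y - x| :=
  (convex_Ici (0:ℝ)).norm_image_sub_le_of_norm_deriv_le (fun z _ => hψ z) hL hx hy

/-- Taylor's formula of first order on `[0,∞)`, without the factor `1/2`. -/
lemma abs_taylor_le {ψ : ℝ → ℝ} {L : ℝ} (hψ : Differentiable ℝ ψ)
    (hψ' : Differentiable ℝ (deriv ψ)) (hL : ∀ x, 0 ≤ x → |deriv (deriv ψ) x| ≤ L)
    {x t : ℝ} (hx : 0 ≤ x) (ht : 0 ≤ t) :
    |ψ x - ψ t - (x - t) * deriv ψ x| ≤ L * (x - t) ^ 2 := by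
  have hL0 : 0 ≤ L := (abs_nonneg _).trans (hL 0 le_rfl)
  have hd : ∀ z ∈ uIcc t x, HasDerivWithinAt (fun y => ψ y - y * deriv ψ x)
      (deriv ψ z - deriv ψ x) (uIcc t x) z := fun z _ => by
    have := ((hψ z).hasDerivAt.sub ((hasDerivAt_id z).mul_const (deriv ψ x))).hasDerivWithinAt
      (s := uIcc t x)
    rwa [one_mul] at this
  have hb : ∀ z ∈ uIcc t x, ‖deriv ψ z - deriv ψ x‖ ≤ L * |x - t| := fun z hz => by
    have hz0 : 0 ≤ z := (le_inf ht hx).trans hz.1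
    refine (abs_sub_le_of_deriv_bound hψ' hL hx hz0).trans (mul_le_mul_of_nonneg_left ?_ hL0)
    rw [abs_sub_comm]
    exact abs_sub_right_of_mem_uIcc hz
  have := (convex_uIcc t x).norm_image_sub_le_of_norm_hasDerivWithin_le hd hb
    left_mem_uIcc right_mem_uIcc
  rw [Real.norm_eq_abs, Real.norm_eq_abs] at this
  calc |ψ x - ψ t - (x - t) * deriv ψ x|
      = |ψ x - x * deriv ψ x - (ψ t - t * deriv ψ x)| := by congr 1; ring
    _ ≤ L * |x - t| * |x - t| := this
    _ = L * (x - t) ^ 2 := by rw [mul_assoc, abs_mul_abs_self]; ring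

lemma integrableOn_continuous_mul {ρ ψ : ℝ → ℝ} {X a b : ℝ} (hρ : IntegrableOn ρ (Ioo 0 X))
    (hψ : Continuous ψ) (ha : 0 ≤ a) (hb : b ≤ X) :
    IntegrableOn (fun x => ψ x * ρ x) (Ioo a b) := by
  obtain ⟨C, hC⟩ := isCompact_Icc.exists_bound_of_continuousOn (s := Icc a b) hψ.continuousOn
  exact integrableOn_bdd_mul measurableSet_Ioo (hρ.mono_set (Ioo_subset_Ioo ha hb)) hψ.measurable
    fun x hx => hC x ⟨hx.1.le, hx.2.le⟩

lemma integral_difference {X τ : ℝ} {ρ ρ0 ψ : ℝ → ℝ} (hρ : FiniteDens X ρ)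
    (h0 : FiniteDens X ρ0) (hψ : Continuous ψ) :
    ∫ x in Ioi (0:ℝ), (ρ x - ρ0 x) / τ * ψ x
      = ((∫ x in Ioo 0 X, ψ x * ρ x) - ∫ x in Ioo 0 X, ψ x * ρ0 x) / τ := by
  have e1 : ∫ x in Ioi (0:ℝ), (ρ x - ρ0 x) / τ * ψ x
      = ∫ x in Ioc 0 X, (ρ x - ρ0 x) / τ * ψ x := by
    apply setIntegral_eq_of_subset_of_ae_sdiff_eq_zero measurableSet_Ioi.nullMeasurableSet
      Ioc_subset_Ioi_self
    filter_upwards [hρ.after, h0.after] with x hx hx0 hx'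
    have : X < x := by
      by_contra hc
      exact hx'.2 ⟨hx'.1, not_lt.1 hc⟩
    rw [hx this, hx0 this]
    simp
  have e2 : ∀ x, (ρ x - ρ0 x) / τ * ψ x = (ψ x * ρ x - ψ x * ρ0 x) / τ := fun x => by ring
  rw [e1, integral_Ioc_eq_integral_Ioo]
  simp only [e2]
  rw [integral_div, integral_sub (integrableOn_continuous_mul hρ.int hψ le_rfl le_rfl)
    (integrableOn_continuous_mul h0.int hψ le_rfl le_rfl)]

/-- The push-forward identity of a plan tested with a continuous function. -/
lemma TPlan.integral_comp {X ℓ m : ℝ} {ρ0 ρ T ψ : ℝ → ℝ} (hp : TPlan ρ0 ρ X T ℓ m)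
    (hρ : FiniteDens X ρ) (h0 : FiniteDens X ρ0) (hψ : Continuous ψ) :
    ∫ x in Ioo 0 X, ψ (T x) * ρ x = (∫ x in Ioo ℓ X, ψ x * ρ0 x) + max m 0 * ψ 0 := by
  have h0i : IntegrableOn ρ0 (Ioo ℓ X) := h0.int.mono_set (Ioo_subset_Ioo_left hp.l_nonneg)
  have e1 : ∫ x, ψ x ∂((densOn ρ (Ioo 0 X)).map T) = ∫ x in Ioo 0 X, ψ (T x) * ρ x := by
    rw [integral_map hp.meas.aemeasurable hψ.measurable.aestronglyMeasurable,
      integral_densOn measurableSet_Ioo hρ.int.1 (hρ.nonneg_Ioo le_rfl)]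
  obtain ⟨C, hC⟩ := isCompact_Icc.exists_bound_of_continuousOn (s := Icc ℓ X) hψ.continuousOn
  have j1 : Integrable ψ (densOn ρ0 (Ioo ℓ X)) :=
    integrable_densOn measurableSet_Ioo h0i hψ.measurable fun x hx => hC x ⟨hx.1.le, hx.2.le⟩
  have j2 : Integrable ψ (ENNReal.ofReal m • Measure.dirac (0:ℝ)) :=
    (integrable_dirac (by simp)).smul_measure ENNReal.ofReal_ne_top
  rw [← e1, hp.push, integral_add_measure j1 j2, integral_smul_measure, integral_dirac,
    integral_densOn measurableSet_Ioo h0i.1 (h0.nonneg_Ioo hp.l_nonneg), ENNReal.toReal_ofReal',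
    smul_eq_mul]

lemma TPlan.integral_deficit {X ℓ m : ℝ} {ρ0 ρ T : ℝ → ℝ} (hp : TPlan ρ0 ρ X T ℓ m)
    (h0 : FiniteDens X ρ0) : ∫ x in Ioo 0 ℓ, ρ0 x = max (-m) 0 := by
  have hn := h0.nonneg_Ioo (b := ℓ) le_rfl
  have := hp.deficit
  rw [densOn_univ_eq_integral measurableSet_Ioo
    (h0.int.mono_set (Ioo_subset_Ioo_right hp.l_le)) hn] at this
  rw [← ENNReal.toReal_ofReal', ← this, ENNReal.toReal_ofReal (integral_nonneg_of_ae hn)]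

/-- The remainder estimate for a plan: testing `ρ - ρ⁰` minus the atom at `0` with `ψ` agrees, up to
Taylor remainders, with testing the displacement `(x - T x) ρ` with `ψ'`. -/
lemma TPlan.remainder {X ℓ m L₁ L₂ : ℝ} {ρ0 ρ T ψ : ℝ → ℝ} (hp : TPlan ρ0 ρ X T ℓ m)
    (hρ : FiniteDens X ρ) (h0 : FiniteDens X ρ0) (hψ : Differentiable ℝ ψ)
    (hψ' : Differentiable ℝ (deriv ψ)) (hL₁ : ∀ x, 0 ≤ x → |deriv ψ x| ≤ L₁)
    (hL₂ : ∀ x, 0 ≤ x → |deriv (deriv ψ) x| ≤ L₂) :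
    |(∫ x in Ioo 0 X, ψ x * ρ x) - (∫ x in Ioo 0 X, ψ x * ρ0 x) - m * ψ 0
        - ∫ x in Ioo 0 X, deriv ψ x * (x - T x) * ρ x|
      ≤ L₂ * (∫ x in Ioo 0 X, (x - T x) ^ 2 * ρ x) + L₁ * ∫ y in Ioo 0 ℓ, y * ρ0 y := by
  have hψc := hψ.continuous
  have hTm : Measurable fun x => x - T x := measurable_id.sub hp.meas
  have hTb : ∀ x ∈ Ioo 0 X, |x - T x| ≤ X := fun x hx => hp.dist_le ⟨hx.1.le, hx.2.le⟩
  have h0l := integrableOn_continuous_mul h0.int hψc (le_refl 0) hp.l_le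
  have h0r := integrableOn_continuous_mul h0.int hψc hp.l_nonneg (le_refl X)
  -- splitting of the datum at `ℓ`
  have hsplit : ∫ x in Ioo 0 X, ψ x * ρ0 x
      = (∫ x in Ioo 0 ℓ, ψ x * ρ0 x) + ∫ x in Ioo ℓ X, ψ x * ρ0 x := by
    have hX0 : 0 ≤ X := hp.l_nonneg.trans hp.l_le
    rw [← integral_zero_to_eq hX0, ← integral_zero_to_eq hp.l_nonneg,
      ← integral_Ioc_eq_integral_Ioo (x := ℓ), ← intervalIntegral.integral_of_le hp.l_le]
    symm
    apply intervalIntegral.integral_add_adjacent_intervals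
    · exact (intervalIntegrable_iff_integrableOn_Ioo_of_le hp.l_nonneg).2 h0l
    · exact (intervalIntegrable_iff_integrableOn_Ioo_of_le hp.l_le).2 h0r
  -- Taylor expansion along the transport
  have iA := integrableOn_continuous_mul hρ.int hψc (le_refl 0) (le_refl X)
  have iP : IntegrableOn (fun x => ψ (T x) * ρ x) (Ioo 0 X) := by
    obtain ⟨C, hC⟩ := isCompact_Icc.exists_bound_of_continuousOn (s := Icc ℓ X) hψc.continuousOn
    exact integrableOn_bdd_mul measurableSet_Ioo hρ.int (hψc.measurable.comp hp.meas)
      fun x hx => hC _ (hp.maps x ⟨hx.1.le, hx.2.le⟩)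
  have iS : IntegrableOn (fun x => deriv ψ x * (x - T x) * ρ x) (Ioo 0 X) :=
    integrableOn_bdd_mul measurableSet_Ioo hρ.int (hψ'.continuous.measurable.mul hTm)
      (C := L₁ * X) fun x hx => by
        rw [abs_mul]
        exact mul_le_mul (hL₁ x hx.1.le) (hTb x hx) (abs_nonneg _)
          ((abs_nonneg _).trans (hL₁ x hx.1.le))
  have iQ : IntegrableOn (fun x => (x - T x) ^ 2 * ρ x) (Ioo 0 X) :=
    integrableOn_bdd_mul measurableSet_Ioo hρ.int (hTm.pow_const 2) (C := X ^ 2) fun x hx => by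
      rw [abs_pow]; exact pow_le_pow_left₀ (abs_nonneg _) (hTb x hx) 2
  have iAP : IntegrableOn (fun x => ψ x * ρ x - ψ (T x) * ρ x) (Ioo 0 X) := iA.sub iP
  have b1 : |(∫ x in Ioo 0 X, ψ x * ρ x) - (∫ x in Ioo 0 X, ψ (T x) * ρ x)
      - ∫ x in Ioo 0 X, deriv ψ x * (x - T x) * ρ x|
      ≤ L₂ * ∫ x in Ioo 0 X, (x - T x) ^ 2 * ρ x := by
    rw [← integral_sub iA iP, ← integral_sub iAP iS, ← integral_const_mul]
    rw [← Real.norm_eq_abs]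
    refine norm_integral_le_of_norm_le (Integrable.const_mul iQ L₂) ?_
    filter_upwards [hρ.nonneg_Ioo le_rfl, ae_restrict_mem measurableSet_Ioo] with x hx hxI
    have ht := abs_taylor_le hψ hψ' hL₂ hxI.1.le
      (hp.l_nonneg.trans (hp.maps x ⟨hxI.1.le, hxI.2.le⟩).1)
    rw [show ψ x * ρ x - ψ (T x) * ρ x - deriv ψ x * (x - T x) * ρ x
      = (ψ x - ψ (T x) - (x - T x) * deriv ψ x) * ρ x by ring, Real.norm_eq_abs, abs_mul,
      abs_of_nonneg hx, ← mul_assoc]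
    exact mul_le_mul_of_nonneg_right ht hx
  -- the part of the datum on `(0,ℓ)` against an atom at `0` of equal mass
  have i0 : IntegrableOn ρ0 (Ioo 0 ℓ) := h0.int.mono_set (Ioo_subset_Ioo_right hp.l_le)
  have b2 : |(∫ x in Ioo 0 ℓ, ψ x * ρ0 x) - max (-m) 0 * ψ 0| ≤ L₁ * ∫ y in Ioo 0 ℓ, y * ρ0 y := by
    rw [← hp.integral_deficit h0, ← integral_mul_const, ← integral_sub h0l (i0.mul_const _),
      ← integral_const_mul, ← Real.norm_eq_abs]
    have iy : IntegrableOn (fun y => y * ρ0 y) (Ioo 0 ℓ) :=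
      integrableOn_continuous_mul h0.int continuous_id (le_refl 0) hp.l_le
    refine norm_integral_le_of_norm_le (Integrable.const_mul iy L₁) ?_
    filter_upwards [h0.nonneg_Ioo le_rfl, ae_restrict_mem measurableSet_Ioo] with y hy hyI
    have ht := abs_sub_le_of_deriv_bound hψ hL₁ le_rfl hyI.1.le
    rw [sub_zero, abs_of_pos hyI.1] at ht
    rw [show ψ y * ρ0 y - ρ0 y * ψ 0 = (ψ y - ψ 0) * ρ0 y by ring, Real.norm_eq_abs, abs_mul,
      abs_of_nonneg hy]
    rw [← mul_assoc]
    exact mul_le_mul_of_nonneg_right ht hy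
  have hm : m = max m 0 - max (-m) 0 := by
    rcases le_total 0 m with h | h
    · rw [max_eq_left h, max_eq_right (by linarith)]; ring
    · rw [max_eq_right h, max_eq_left (by linarith)]; ring
  have hP := hp.integral_comp hρ h0 hψc
  have hmψ : m * ψ 0 = max m 0 * ψ 0 - max (-m) 0 * ψ 0 := by
    rw [← sub_mul, ← hm]
  rw [hsplit, hmψ]
  rw [hP] at b1
  rw [abs_le] at b1 b2 ⊢
  constructor <;> linarith [b1.1, b1.2, b2.1, b2.2]

/-- Proposition 3.3. Let `(X, ρ)` be a minimizer of the JKO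
functional with `X ≥ X⁰`, with transport structure `(Tmap, ℓ)` (convention `ℓ = 0`
when `M := M(ρ,ρ⁰) ≥ 0`), and let `g` be the weak derivative of `ρ` on `(0,X)`.
Then for every `ψ ∈ C_c^∞(ℝ₊)`:
`|∫_{ℝ₊} ((ρ−ρ⁰)/τ)ψ − (M/τ)ψ(0) + ∫₀^X ρ' ψ'|
  ≤ (‖ψ''‖_∞/τ) 𝐖₂²(ρ,ρ⁰) + (‖ψ'‖_∞/τ) ∫₀^{ℓ} y ρ⁰(y) dy`. -/
theorem euler_lagrange_with_boundary_remainder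
    (lam α β θ T X0 ρmin ρmax τ mτ Kτ : ℝ) (ρ0 ρ0' : ℝ → ℝ)
    (hlam : 0 < lam) (hα : 0 < α) (hθ : 0 < θ) (hβθ : β + θ < 1) (hT : 0 < T)
    (hH2 : H2 β θ X0 ρmin ρmax ρ0 ρ0')
    (hτ0 : 0 < τ) (hτ1 : τ < 1) (hmτ : 0 < mτ) (hKτ : 0 < Kτ)
    (X : ℝ) (ρ : ℝ → ℝ)
    (hmin : IsJKOMin lam α β θ τ Kτ mτ X0 ρ0 X ρ) (hXX0 : X0 ≤ X)
    (Tmap : ℝ → ℝ) (ℓ : ℝ)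
    (htrans : TransportStruct ρ0 ρ X Tmap ℓ)
    (g : ℝ → ℝ)
    (hg : ∀ ξ : ℝ → ℝ, ContDiff ℝ (⊤ : ℕ∞) ξ → tsupport ξ ⊆ Ioo 0 X →
      (∫ x in (0:ℝ)..X, ρ x * deriv ξ x) = -∫ x in (0:ℝ)..X, g x * ξ x) :
    ∀ ψ : ℝ → ℝ, ContDiff ℝ (⊤ : ℕ∞) ψ → HasCompactSupport ψ →
      |(∫ x in Ioi (0:ℝ), (ρ x - ρ0 x) / τ * ψ x) - Mdiff ρ ρ0 / τ * ψ 0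
          + ∫ x in (0:ℝ)..X, g x * deriv ψ x|
        ≤ (⨆ x ∈ Ici (0:ℝ), |deriv (deriv ψ) x|) / τ * W2sq ρ ρ0
          + (⨆ x ∈ Ici (0:ℝ), |deriv ψ x|) / τ * ∫ y in (0:ℝ)..ℓ, y * ρ0 y := by
  intro ψ hψ hψc
  have hX0pos : 0 < X0 := hH2.1
  have hX : 0 < X := hX0pos.trans_le hXX0
  have h0 : FiniteDens X ρ0 := hH2.finiteDens hXX0
  have h0' : ∀ᵐ y : ℝ, y ∈ Ioi X0 → ρ0 y = 1 := (hH2.finiteDens le_rfl).after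
  have h0e := ae_eq_one_of_xA ⟨X0, hX0pos, h0'⟩
  have hxA : xA ρ0 ≤ X := (xA_le hX0pos h0').trans hXX0
  obtain ⟨hρ, hp, hW⟩ := htrans.plan hX hmin.1 h0 (hH2.Mfun_ne_zero hβθ)
  have hfv := fun {ζ ζ' : ℝ → ℝ} {B : ℝ} (hζ : IsTestField X ζ ζ' B) =>
    first_variation hmin hτ0 hX hρ h0 hxA h0e hp hW hζ
  have hent : IntegrableOn (fun x => ρ x * Real.log (ρ x)) (Ioo 0 X) := by
    by_contra hc
    refine hc (entropy_integrable_of_stationary hρ (fun x hx => hH2.le_one hx) hp ?_)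
    intro ξ hξ hs
    obtain ⟨B, hB⟩ := exists_isTestField hξ hs
    exact (hfv hB).2 hc
  -- the weak derivative of `ρ` is `-(x - T x) ρ / τ` when tested
  have hh : IntegrableOn (fun x => -(1 / τ) * ((x - Tmap x) * ρ x)) (Ioo 0 X) :=
    (integrableOn_bdd_mul measurableSet_Ioo hρ.int (measurable_id.sub hp.meas) (C := X)
      fun x hx => hp.dist_le ⟨hx.1.le, hx.2.le⟩).const_mul _
  have hh_eq : ∀ φ : ℝ → ℝ, ∫ x in Ioo 0 X, -(1 / τ) * ((x - Tmap x) * ρ x) * φ x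
      = -(1 / τ) * ∫ x in Ioo 0 X, φ x * (x - Tmap x) * ρ x := fun φ => by
    rw [← integral_const_mul]
    congr 1
    ext x
    ring
  have hgh : ∀ ξ : ℝ → ℝ, ContDiff ℝ (⊤ : ℕ∞) ξ → tsupport ξ ⊆ Ioo 0 X →
      ∫ x in Ioo 0 X, g x * ξ x = ∫ x in Ioo 0 X, -(1 / τ) * ((x - Tmap x) * ρ x) * ξ x := by
    intro ξ hξ hs
    obtain ⟨B, hB⟩ := exists_isTestField hξ hs
    have h1 := (hfv hB).1 hent
    have h2 := hg ξ hξ hs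
    rw [integral_zero_to_eq hX.le, integral_zero_to_eq hX.le] at h2
    simp only [mul_comm (ρ _)] at h2
    rw [hh_eq, h1, h2]
    field_simp
  obtain ⟨hψ1, hψ2⟩ := contDiff_infty_iff_deriv.1 hψ
  obtain ⟨hψ3, hψ4⟩ := contDiff_infty_iff_deriv.1 hψ2
  have hpair := weak_deriv_pairing hh hgh hψ2.continuous
  rw [hh_eq] at hpair
  set L₁ := ⨆ x ∈ Ici (0:ℝ), |deriv ψ x| with hL₁
  set L₂ := ⨆ x ∈ Ici (0:ℝ), |deriv (deriv ψ) x| with hL₂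
  have hb1 : ∀ x, 0 ≤ x → |deriv ψ x| ≤ L₁ := fun x hx =>
    le_iSup_of_hasCompactSupport hψ2.continuous hψc.deriv hx
  have hb2 : ∀ x, 0 ≤ x → |deriv (deriv ψ) x| ≤ L₂ := fun x hx =>
    le_iSup_of_hasCompactSupport hψ4.continuous hψc.deriv.deriv hx
  have hL₂0 : 0 ≤ L₂ := (abs_nonneg _).trans (hb2 0 le_rfl)
  have hrem := hp.remainder hρ h0 hψ1 hψ3 hb1 hb2
  have hWle : ∫ x in Ioo 0 X, (x - Tmap x) ^ 2 * ρ x ≤ W2sq ρ ρ0 := by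
    rw [hW]
    have : 0 ≤ ∫ y in Ioo 0 ℓ, y ^ 2 * ρ0 y := by
      apply integral_nonneg_of_ae
      filter_upwards [h0.nonneg_Ioo le_rfl] with y hy
      exact mul_nonneg (sq_nonneg y) hy
    linarith
  rw [integral_difference hρ h0 hψ.continuous, integral_zero_to_eq hX.le, hpair,
    integral_zero_to_eq hp.l_nonneg]
  set A₁ := ∫ x in Ioo 0 X, ψ x * ρ x
  set A₀ := ∫ x in Ioo 0 X, ψ x * ρ0 x
  set S := ∫ x in Ioo 0 X, deriv ψ x * (x - Tmap x) * ρ x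
  have e : (A₁ - A₀) / τ - Mdiff ρ ρ0 / τ * ψ 0 + -(1 / τ) * S
      = (A₁ - A₀ - Mdiff ρ ρ0 * ψ 0 - S) / τ := by ring
  rw [e, abs_div, abs_of_pos hτ0, div_mul_eq_mul_div, div_mul_eq_mul_div, ← add_div]
  gcongr
  exact hrem.trans (by gcongr)

end
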